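/- arXiv:math/0007075 — 4 statements merged into one kernel-verified Lean document; each statement's English description precedes it below -/
import Mathlib

section
/- Let f = p/q be a rational function of two real variables bounded near (x₀,y₀) and let d ∈ D_f((x₀,y₀)) be any limiting value of f at (x₀,y₀). Then there exists a function Φ of type (i) such that at least one of the following four one-sided limits exists and equals d: lim_{x→x₀⁺} f(x, y₀+Φ(x−x₀)), lim_{x→x₀⁻} f(x, y₀+Φ(x−x₀)), lim_{y→y₀⁺} f(x₀+Φ(y−y₀), y), lim_{y→y₀⁻} f(x₀+Φ(y−y₀), y). -/
open MvPolynomial Filter Topology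

/-- Evaluation of a two-variable real polynomial at a point of `ℝ²`. -/
noncomputable def pev (p : MvPolynomial (Fin 2) ℝ) (v : ℝ × ℝ) : ℝ :=
  MvPolynomial.eval ![v.1, v.2] p

/-- `p/q` is bounded near `v₀`. -/
def BoundedNear (p q : MvPolynomial (Fin 2) ℝ) (v₀ : ℝ × ℝ) : Prop :=
  ∃ U ∈ nhds v₀, ∃ M : ℝ, ∀ v ∈ U, pev q v ≠ 0 → |pev p v / pev q v| ≤ M

/-- The set of limiting values of `p/q` at `v₀`. -/
def LimVals (p q : MvPolynomial (Fin 2) ℝ) (v₀ : ℝ × ℝ) : Set ℝ :=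
  {d | ∃ v : ℕ → ℝ × ℝ, Filter.Tendsto v Filter.atTop (nhds v₀) ∧ (∀ n, v n ≠ v₀) ∧
    (∀ n, pev q (v n) ≠ 0) ∧
    Filter.Tendsto (fun n => pev p (v n) / pev q (v n)) Filter.atTop (nhds d)}

/-- `Φ` is a function of type (i). -/
def TypeI (Φ : ℝ → ℝ) : Prop :=
  ∃ (N : ℕ) (φ : Fin N → ℝ) (e : Fin N → ℚ),
    (∀ k, φ k ≠ 0) ∧ StrictMono e ∧ (∀ k, 1 ≤ e k) ∧
    ∀ t : ℝ, Φ t = ∑ k, φ k * |t| ^ ((e k : ℝ))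

/-!
Pass to an ultrafilter along a sequence realizing `d`. After a translation, a reflection and an
exchange of the variables it lives in the cone `|z| ≤ t`, `t > 0`, at the origin. Since `p` and `q`
are coprime, a Bézout identity `u p + v q = r(t)` together with `p = O(q)` gives `t ^ K = O(q)`.

Now run the Newton–Puiseux algorithm on `q`, applying to `p / q` the substitutions
`t = s ^ N`, `z = s ^ E * w` with `E / N` the first slope of the Newton polygon. Boundedness forces
`p` to be divisible by the power of `s` that splits off from `q`. Along the ultrafilter `w` either
converges to a real centre `a`, and one recentres at `a` and continues, or tends to infinity, and
then `d` is a ratio of two coefficients, which is also attained along a monomial arc. Each step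
lowers either the order of `q` on `s = 0` or the exponent `K`, so eventually `q ≠ 0` at the centre.
There `p / q` is continuous and `d` is its value, hence the limit along any arc through the centre.
Following the arc back through the substitutions gives `z = t ψ(t ^ (1 / N))` with `ψ` a polynomial.
-/

open scoped Polynomial Polynomial.Bivariate

section Bezout

variable {R : Type*} [CommRing R] [IsDomain R]

/-- A common divisor over the fraction field is, up to a unit, the image of a primitive
polynomial, and Gauss's lemma turns the latter into a common divisor over `R`. -/
lemma isRelPrime_map_fractionRing [UniqueFactorizationMonoid R] {a b : R[X]}
    (hab : IsRelPrime a b) :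
    IsRelPrime (a.map (algebraMap R (FractionRing R))) (b.map (algebraMap R (FractionRing R))) := by
  have : NormalizedGCDMonoid R := Classical.arbitrary _
  have map_injective := IsFractionRing.injective R (FractionRing R)
  intro D hDa hDb
  have hD : D ≠ 0 := by
    rintro rfl
    rw [zero_dvd_iff, Polynomial.map_eq_zero_iff map_injective] at hDa hDb
    exact not_isUnit_zero (hab (zero_dvd_iff.2 hDa) (zero_dvd_iff.2 hDb))
  set D₀ := IsLocalization.integerNormalization (nonZeroDivisors R) D
  obtain ⟨c, hc, hcD⟩ := IsLocalization.integerNormalization_spec (nonZeroDivisors R) D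
  have primPart_dvd : D₀.primPart.map (algebraMap R (FractionRing R)) ∣ D := by
    have hunit : IsUnit (Polynomial.C (algebraMap R (FractionRing R) c)) :=
      Polynomial.isUnit_C.2 (IsLocalization.map_units _ (⟨c, hc⟩ : nonZeroDivisors R))
    have h := Polynomial.map_dvd (algebraMap R (FractionRing R)) D₀.primPart_dvd
    rwa [hcD, Algebra.smul_def, Polynomial.algebraMap_apply, hunit.dvd_mul_left] at h
  exact Polynomial.isUnit_or_eq_zero_of_isUnit_integerNormalization_primPart hD
    (hab (D₀.isPrimitive_primPart.dvd_of_fraction_map_dvd_fraction_map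
        (primPart_dvd.trans hDa))
      (D₀.isPrimitive_primPart.dvd_of_fraction_map_dvd_fraction_map (primPart_dvd.trans hDb)))

lemma exists_mul_add_mul_eq_C_of_isRelPrime [UniqueFactorizationMonoid R] {a b : R[X]}
    (hab : IsRelPrime a b) :
    ∃ (u v : R[X]) (r : R), r ≠ 0 ∧ u * a + v * b = Polynomial.C r := by
  obtain ⟨u, v, huv⟩ := (isRelPrime_map_fractionRing hab).isCoprime
  obtain ⟨c, hc, hcu⟩ := IsLocalization.integerNormalization_spec (nonZeroDivisors R) u
  obtain ⟨e, he, hev⟩ := IsLocalization.integerNormalization_spec (nonZeroDivisors R) v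
  refine ⟨Polynomial.C e * IsLocalization.integerNormalization (nonZeroDivisors R) u,
    Polynomial.C c * IsLocalization.integerNormalization (nonZeroDivisors R) v, e * c,
    mul_ne_zero (nonZeroDivisors.ne_zero he) (nonZeroDivisors.ne_zero hc),
    Polynomial.map_injective _ (IsFractionRing.injective R (FractionRing R)) ?_⟩
  rw [Algebra.smul_def, Polynomial.algebraMap_apply] at hcu hev
  simp only [Polynomial.map_add, Polynomial.map_mul, Polynomial.map_C, map_mul, hcu, hev]
  linear_combination (Polynomial.C (algebraMap R (FractionRing R) e) *
    Polynomial.C (algebraMap R (FractionRing R) c)) * huv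

end Bezout

section Bivariate

variable {R : Type*} [CommRing R]

/-- The restriction `A(0, z)` of a bivariate polynomial `A(t, z)` to the line `t = 0`. The inner
variable of `R[X][Y]` plays the role of `t`, the outer one that of `z`. -/
noncomputable def specialFiber (A : R[X][Y]) : R[X] := A.map (Polynomial.evalRingHom 0)

lemma specialFiber_coeff (A : R[X][Y]) (j : ℕ) :
    (specialFiber A).coeff j = (A.coeff j).coeff 0 := by
  rw [specialFiber, Polynomial.coeff_map, Polynomial.coe_evalRingHom,
    Polynomial.coeff_zero_eq_eval_zero]

lemma specialFiber_eval (A : R[X][Y]) (z : R) : (specialFiber A).eval z = A.evalEval 0 z :=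
  Polynomial.map_evalRingHom_eval 0 z A

lemma specialFiber_taylor_C (A : R[X][Y]) (a : R) :
    specialFiber (Polynomial.taylor (Polynomial.C a) A) = Polynomial.taylor a (specialFiber A) := by
  rw [specialFiber, Polynomial.map_taylor, Polynomial.coe_evalRingHom, Polynomial.eval_C,
    specialFiber]

lemma C_X_dvd_iff_specialFiber_eq_zero {A : R[X][Y]} :
    Polynomial.C Polynomial.X ∣ A ↔ specialFiber A = 0 := by
  simp only [Polynomial.C_dvd_iff_dvd_coeff, Polynomial.X_dvd_iff, Polynomial.ext_iff,
    specialFiber_coeff, Polynomial.coeff_zero]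

lemma exists_eq_C_X_pow_mul_specialFiber_ne_zero [IsDomain R] [WfDvdMonoid R] {B : R[X][Y]}
    (hB : B ≠ 0) :
    ∃ k B₁, B = Polynomial.C (Polynomial.X ^ k) * B₁ ∧ specialFiber B₁ ≠ 0 := by
  have hfin : FiniteMultiplicity (Polynomial.C Polynomial.X : R[X][Y]) B :=
    .of_prime_left (Polynomial.prime_C_iff.2 Polynomial.prime_X) hB
  obtain ⟨B₁, hB₁, hdvd⟩ := hfin.exists_eq_pow_mul_and_not_dvd
  exact ⟨_, B₁, by rwa [map_pow], mt C_X_dvd_iff_specialFiber_eq_zero.2 hdvd⟩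

lemma evalEval_taylor_C (A : R[X][Y]) (a t z : R) :
    (Polynomial.taylor (Polynomial.C a) A).evalEval t z = A.evalEval t (z + a) := by
  rw [← Polynomial.map_evalRingHom_eval, Polynomial.map_taylor, Polynomial.taylor_eval,
    Polynomial.map_evalRingHom_eval, Polynomial.coe_evalRingHom, Polynomial.eval_C]

/-- The substitution `A(s ^ N, s ^ E * w)` in a bivariate polynomial `A(t, z)`. For `E / N` the
slope of an edge of the Newton polygon, it is a ramification of order `N` followed by `E`
blow-ups. -/
noncomputable def weightedSubst (N E : ℕ) (A : R[X][Y]) : R[X][Y] :=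
  (A.map (Polynomial.expand R N : R[X] →+* R[X])).comp
    (Polynomial.C (Polynomial.X ^ E) * Polynomial.X)

lemma weightedSubst_coeff (N E : ℕ) (A : R[X][Y]) (j : ℕ) :
    (weightedSubst N E A).coeff j =
      Polynomial.expand R N (A.coeff j) * Polynomial.X ^ (E * j) := by
  rw [weightedSubst, Polynomial.comp_C_mul_X_coeff, Polynomial.coeff_map, pow_mul, RingHom.coe_coe]

lemma evalEval_weightedSubst (N E : ℕ) (A : R[X][Y]) (s w : R) :
    (weightedSubst N E A).evalEval s w = A.evalEval (s ^ N) (s ^ E * w) := by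
  have hcomp : (Polynomial.evalRingHom s).comp (Polynomial.expand R N : R[X] →+* R[X]) =
      Polynomial.evalRingHom (s ^ N) := by
    ext <;> simp
  rw [← Polynomial.map_evalRingHom_eval, ← Polynomial.map_evalRingHom_eval, weightedSubst,
    Polynomial.map_comp, Polynomial.map_map, hcomp, Polynomial.eval_comp]
  simp

lemma weightedSubst_ne_zero {N : ℕ} (hN : 0 < N) (E : ℕ) {A : R[X][Y]} (hA : A ≠ 0) :
    weightedSubst N E A ≠ 0 := by
  contrapose! hA
  ext1 j
  have hj : (weightedSubst N E A).coeff j = 0 := by rw [hA, Polynomial.coeff_zero]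
  rw [weightedSubst_coeff] at hj
  exact (Polynomial.expand_eq_zero hN).1 (Polynomial.mul_X_pow_eq_zero hj)

/-- The hypothesis says that the Newton polygon of `B` lies on or above the line of slope
`-E / N` through the vertex `(m, 0)`; the special fibre of `B₁` collects the terms on that line. -/
lemma exists_strictTransform {N E m : ℕ} (hE : 0 < E) {B : R[X][Y]}
    (hdvd : ∀ j < m, Polynomial.X ^ (E * (m - j)) ∣ Polynomial.expand R N (B.coeff j)) :
    ∃ B₁, weightedSubst N E B = Polynomial.C (Polynomial.X ^ (E * m)) * B₁ ∧
      (specialFiber B₁).natDegree ≤ m ∧ ∀ j ≤ m, (specialFiber B₁).coeff j =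
        (Polynomial.expand R N (B.coeff j)).coeff (E * (m - j)) := by
  have hC : Polynomial.C (Polynomial.X ^ (E * m)) ∣ weightedSubst N E B := by
    rw [Polynomial.C_dvd_iff_dvd_coeff]
    intro j
    rw [weightedSubst_coeff]
    rcases lt_or_ge j m with hj | hj
    · have h := mul_dvd_mul_right (hdvd j hj) (Polynomial.X ^ (E * j))
      rwa [← pow_add, ← mul_add, Nat.sub_add_cancel hj.le] at h
    · exact (pow_dvd_pow _ (Nat.mul_le_mul_left E hj)).mul_left _
  obtain ⟨B₁, hB₁⟩ := hC
  have coeff_eq (j : ℕ) : (specialFiber B₁).coeff j =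
      if j ≤ m then (Polynomial.expand R N (B.coeff j)).coeff (E * (m - j)) else 0 := by
    have h := congrArg (fun A => (A.coeff j).coeff (E * m)) hB₁
    simp only [weightedSubst_coeff, Polynomial.coeff_C_mul, Polynomial.coeff_mul_X_pow',
      Polynomial.coeff_X_pow_mul', le_refl, if_true, Nat.sub_self, Nat.mul_le_mul_left_iff hE] at h
    rw [specialFiber_coeff, ← h, Nat.mul_sub]
  refine ⟨B₁, hB₁, Polynomial.natDegree_le_iff_coeff_eq_zero.2 fun j hj => ?_, fun j hj => ?_⟩
  · rw [coeff_eq, if_neg hj.not_ge]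
  · rw [coeff_eq, if_pos hj]

end Bivariate

section Newton

lemma rootMultiplicity_lt_natDegree_of_nextCoeff_eq_zero {R : Type*} [CommRing R] [IsDomain R]
    [CharZero R] {β : R[X]} (hnext : β.nextCoeff = 0) {j : ℕ} (hj : j < β.natDegree)
    (hcoeff : β.coeff j ≠ 0) (a : R) :
    β.rootMultiplicity a < β.natDegree := by
  by_contra! hle
  have hdvd : (Polynomial.X - Polynomial.C a) ^ β.natDegree ∣ β :=
    (pow_dvd_pow _ hle).trans (β.pow_rootMultiplicity_dvd a)
  have hβ : β = Polynomial.C β.leadingCoeff * (Polynomial.X - Polynomial.C a) ^ β.natDegree :=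
    Polynomial.eq_leadingCoeff_mul_of_monic_of_dvd_of_natDegree_le
      ((Polynomial.monic_X_sub_C a).pow _) hdvd (by simp)
  have hlead : β.leadingCoeff ≠ 0 :=
    Polynomial.leadingCoeff_ne_zero.2 (by rintro rfl; simp at hcoeff)
  have ha : a = 0 := by
    rw [hβ, Polynomial.nextCoeff_C_mul, (Polynomial.monic_X_sub_C a).nextCoeff_pow,
      Polynomial.nextCoeff_X_sub_C] at hnext
    simpa [hlead, (Nat.zero_lt_of_lt hj).ne'] using hnext
  rw [hβ, ha, map_zero, sub_zero, Polynomial.coeff_C_mul_X_pow, if_neg hj.ne] at hcoeff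
  exact hcoeff rfl

/-- The minimum of the slopes `ord (b j) / (m - j)`, with the denominators cleared. -/
lemma exists_minimal_slope {R : Type*} [Semiring R] (b : ℕ → R[X]) {m : ℕ}
    (hb : ∃ j < m, b j ≠ 0) :
    ∃ j₀ < m, b j₀ ≠ 0 ∧ ∀ j < m, b j ≠ 0 →
      (b j₀).natTrailingDegree * (m - j) ≤ (m - j₀) * (b j).natTrailingDegree := by
  classical
  obtain ⟨i, hi, hbi⟩ := hb
  obtain ⟨j₀, hj₀, hmin⟩ := ((Finset.range m).filter (b · ≠ 0)).exists_min_image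
    (fun j => ((b j).natTrailingDegree : ℚ) / ((m - j : ℕ) : ℚ)) ⟨i, by simp [hi, hbi]⟩
  simp only [Finset.mem_filter, Finset.mem_range] at hj₀ hmin
  refine ⟨j₀, hj₀.1, hj₀.2, fun j hj hbj => ?_⟩
  have h := hmin j ⟨hj, hbj⟩
  rw [div_le_div_iff₀ (mod_cast Nat.sub_pos_of_lt hj₀.1) (mod_cast Nat.sub_pos_of_lt hj)] at h
  rw [mul_comm (m - j₀)]
  exact_mod_cast h

lemma exists_edge_of_not_dvd {R : Type*} [CommSemiring R] {b : ℕ → R[X]} {m : ℕ}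
    (hb : ∀ j < m, (b j).coeff 0 = 0) (hdvd : ∃ j < m, ¬ Polynomial.X ^ (m - j) ∣ b j) :
    ∃ E j₀, 0 < E ∧ j₀ < m ∧ E < m - j₀ ∧ (b j₀).coeff E ≠ 0 ∧
      ∀ j < m, Polynomial.X ^ (E * (m - j)) ∣ Polynomial.expand R (m - j₀) (b j) := by
  obtain ⟨i, hi, hdvd⟩ := hdvd
  have hbi : b i ≠ 0 := fun h => hdvd (h ▸ dvd_zero _)
  obtain ⟨j₀, hj₀, hbj₀, hmin⟩ := exists_minimal_slope b ⟨i, hi, hbi⟩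
  have htrail : (b i).natTrailingDegree < m - i := by
    contrapose! hdvd
    exact Polynomial.X_pow_dvd_iff.2 fun k hk =>
      Polynomial.coeff_eq_zero_of_lt_natTrailingDegree (hk.trans_le hdvd)
  refine ⟨(b j₀).natTrailingDegree, j₀, ?_, hj₀, ?_, ?_, fun j hj => ?_⟩
  · exact Nat.pos_of_ne_zero fun h =>
      (Polynomial.natTrailingDegree_eq_zero.1 h).elim hbj₀ (· (hb j₀ hj₀))
  · have hN : 0 < m - j₀ := Nat.sub_pos_of_lt hj₀
    exact lt_of_mul_lt_mul_right ((hmin i hi hbi).trans_lt (by gcongr)) (Nat.zero_le (m - i))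
  · exact mt Polynomial.trailingCoeff_eq_zero.1 hbj₀
  · rcases eq_or_ne (b j) 0 with hbj | hbj
    · rw [hbj, map_zero]
      exact dvd_zero _
    · have h : Polynomial.X ^ (b j).natTrailingDegree ∣ b j := Polynomial.X_pow_dvd_iff.2
        fun k hk => Polynomial.coeff_eq_zero_of_lt_natTrailingDegree hk
      have h := map_dvd (Polynomial.expand R (m - j₀)) h
      rw [map_pow, Polynomial.expand_X, ← pow_mul] at h
      exact (pow_dvd_pow _ (hmin j hj hbj)).trans h

lemma exists_blowUp {R : Type*} [CommRing R] [IsDomain R] {B : R[X][Y]} {m : ℕ}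
    (hm : (B.coeff m).coeff 0 ≠ 0) (hdvd : ∀ j < m, Polynomial.X ^ (m - j) ∣ B.coeff j) :
    ∃ B₁, weightedSubst 1 1 B = Polynomial.C (Polynomial.X ^ m) * B₁ ∧ specialFiber B₁ ≠ 0 ∧
      ∀ a, (specialFiber B₁).rootMultiplicity a ≤ m := by
  obtain ⟨B₁, hB₁, hdeg, hcoeff⟩ := exists_strictTransform (N := 1) (m := m) one_pos
    (B := B) (by simpa only [one_mul, Polynomial.expand_one] using hdvd)
  have hne : specialFiber B₁ ≠ 0 := by
    intro h0
    have h := hcoeff m le_rfl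
    rw [h0, Polynomial.expand_one, Nat.sub_self, mul_zero] at h
    exact hm h.symm
  rw [one_mul] at hB₁
  refine ⟨B₁, hB₁, hne, fun a => (Polynomial.rootMultiplicity_le_iff hne a m).2 fun h => ?_⟩
  have h := Polynomial.natDegree_le_of_dvd h hne
  rw [Polynomial.natDegree_pow, Polynomial.natDegree_X_sub_C] at h
  omega

/-- On an edge of slope `E / N < 1` with `N = m - j₀`, the coefficient of index `m - 1` vanishes
because `N` does not divide `E`. -/
lemma exists_ramified_blowUp {R : Type*} [CommRing R] [IsDomain R] [CharZero R] {B : R[X][Y]}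
    {m : ℕ} (hm : (B.coeff m).coeff 0 ≠ 0) (hlt : ∀ j < m, (B.coeff j).coeff 0 = 0)
    (hdvd : ∃ j < m, ¬ Polynomial.X ^ (m - j) ∣ B.coeff j) :
    ∃ N E B₁, 0 < N ∧ 0 < E ∧
      weightedSubst N E B = Polynomial.C (Polynomial.X ^ (E * m)) * B₁ ∧ specialFiber B₁ ≠ 0 ∧
      ∀ a, (specialFiber B₁).rootMultiplicity a < m := by
  obtain ⟨E, j₀, hE, hj₀, hEN, hcoeff₀, hdvd⟩ := exists_edge_of_not_dvd hlt hdvd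
  have hN : 0 < m - j₀ := Nat.sub_pos_of_lt hj₀
  obtain ⟨B₁, hB₁, hdeg, hcoeff⟩ := exists_strictTransform hE hdvd
  have hfiber₀ : (specialFiber B₁).coeff j₀ ≠ 0 := by
    rwa [hcoeff j₀ hj₀.le, Polynomial.coeff_expand_mul hN]
  have hdeg : (specialFiber B₁).natDegree = m := by
    refine Polynomial.natDegree_eq_of_le_of_coeff_ne_zero hdeg ?_
    rwa [hcoeff m le_rfl, Nat.sub_self, mul_zero, Polynomial.coeff_expand hN,
      if_pos (dvd_zero _), Nat.zero_div]
  have hnext : (specialFiber B₁).nextCoeff = 0 := by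
    rw [Polynomial.nextCoeff_of_natDegree_pos (by omega), hdeg, hcoeff _ (Nat.sub_le m 1),
      Nat.sub_sub_self (by omega), mul_one, Polynomial.coeff_expand hN,
      if_neg (Nat.not_dvd_of_pos_of_lt hE hEN)]
  exact ⟨m - j₀, E, B₁, hN, hE, hB₁, fun h => hfiber₀ (by rw [h, Polynomial.coeff_zero]),
    hdeg ▸ rootMultiplicity_lt_natDegree_of_nextCoeff_eq_zero hnext (hdeg ▸ hj₀) hfiber₀⟩

lemma exists_newton_step {R : Type*} [CommRing R] [IsDomain R] [CharZero R] {B : R[X][Y]} {m : ℕ}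
    (hB : specialFiber B ≠ 0) (hm : (specialFiber B).natTrailingDegree = m) :
    ∃ N E B₁, 0 < N ∧ 0 < E ∧
      weightedSubst N E B = Polynomial.C (Polynomial.X ^ (E * m)) * B₁ ∧ specialFiber B₁ ≠ 0 ∧
      ∀ a, (specialFiber B₁).rootMultiplicity a < m ∨
        N = 1 ∧ (specialFiber B₁).rootMultiplicity a ≤ m := by
  have hcoeff_m : (B.coeff m).coeff 0 ≠ 0 := by
    rw [← specialFiber_coeff, ← hm]
    exact mt Polynomial.trailingCoeff_eq_zero.1 hB
  have hcoeff_lt : ∀ j < m, (B.coeff j).coeff 0 = 0 := fun j hj => by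
    rw [← specialFiber_coeff, Polynomial.coeff_eq_zero_of_lt_natTrailingDegree (hm ▸ hj)]
  by_cases hdvd : ∀ j < m, Polynomial.X ^ (m - j) ∣ B.coeff j
  · obtain ⟨B₁, hB₁, hne, hmult⟩ := exists_blowUp hcoeff_m hdvd
    exact ⟨1, 1, B₁, one_pos, one_pos, by rwa [one_mul], hne, fun a => .inr ⟨rfl, hmult a⟩⟩
  · push Not at hdvd
    obtain ⟨N, E, B₁, hN, hE, hB₁, hne, hmult⟩ :=
      exists_ramified_blowUp hcoeff_m hcoeff_lt hdvd
    exact ⟨N, E, B₁, hN, hE, hB₁, hne, fun a => .inl (hmult a)⟩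

end Newton

section BoundedFraction

open Asymptotics

/-- The value at `v` of a bivariate real polynomial, as a function on the plane. -/
noncomputable def evalAt (A : ℝ[X][Y]) (v : ℝ × ℝ) : ℝ := A.evalEval v.1 v.2

/-- The value at `v` of the fraction `A / B` of bivariate polynomials (`0` where `B` vanishes). -/
noncomputable def fracEval (A B : ℝ[X][Y]) (v : ℝ × ℝ) : ℝ := evalAt A v / evalAt B v

/-- The filter `t → 0⁺`, `z → 0` of punctured right half-neighbourhoods of the origin. -/
noncomputable abbrev halfNhds : Filter (ℝ × ℝ) := 𝓝[>] 0 ×ˢ 𝓝 0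

lemma evalEval_eq_sum_range' {R : Type*} [CommRing R] {A : R[X][Y]} {n : ℕ}
    (hn : A.natDegree < n) (t z : R) :
    A.evalEval t z = ∑ j ∈ Finset.range n, (A.coeff j).eval t * z ^ j := by
  rw [← Polynomial.eval₂_evalRingHom, Polynomial.eval₂_eq_sum_range' _ hn]
  rfl

lemma continuous_evalAt (A : ℝ[X][Y]) : Continuous (evalAt A) := by
  have hsum : evalAt A = fun v => ∑ j ∈ Finset.range (A.natDegree + 1),
      (A.coeff j).eval v.1 * v.2 ^ j :=
    funext fun v => evalEval_eq_sum_range' (Nat.lt_succ_self _) v.1 v.2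
  rw [hsum]
  exact continuous_finsetSum _ fun j _ =>
    ((A.coeff j).continuous.comp continuous_fst).mul (continuous_snd.pow j)

lemma halfNhds_le_nhds : halfNhds ≤ 𝓝 0 := by
  rw [Prod.zero_eq_mk, nhds_prod_eq]
  exact prod_mono_left _ nhdsWithin_le_nhds

lemma tendsto_evalAt_halfNhds (A : ℝ[X][Y]) : Tendsto (evalAt A) halfNhds (𝓝 (evalAt A 0)) :=
  ((continuous_evalAt A).tendsto 0).mono_left halfNhds_le_nhds

lemma tendsto_fst_halfNhds : Tendsto Prod.fst halfNhds (𝓝[>] (0 : ℝ)) := tendsto_fst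

lemma eventually_fst_pos_halfNhds : ∀ᶠ v in halfNhds, 0 < v.1 :=
  tendsto_fst_halfNhds.eventually eventually_mem_nhdsWithin

lemma evalAt_C_X_pow_mul (k : ℕ) (A : ℝ[X][Y]) :
    evalAt (Polynomial.C (Polynomial.X ^ k) * A) = fun v => v.1 ^ k * evalAt A v := by
  funext v
  simp only [evalAt, Polynomial.evalEval_mul, Polynomial.evalEval_C, Polynomial.eval_pow,
    Polynomial.eval_X]

lemma isBigO_of_fst_pow_mul {k : ℕ} {f g : ℝ × ℝ → ℝ}
    (h : (fun v => v.1 ^ k * f v) =O[halfNhds] fun v => v.1 ^ k * g v) : f =O[halfNhds] g := by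
  refine ((isBigO_refl (fun v : ℝ × ℝ => (v.1 ^ k)⁻¹) halfNhds).mul h).congr' ?_ ?_ <;>
  · filter_upwards [eventually_fst_pos_halfNhds] with v hv
    rw [inv_mul_cancel_left₀ (pow_pos hv k).ne']

lemma isBigO_fst_pow_of_le {m n : ℕ} (h : m ≤ n) :
    (fun v : ℝ × ℝ => v.1 ^ n) =O[halfNhds] fun v => v.1 ^ m := by
  have hone : (fun v : ℝ × ℝ => v.1 ^ (n - m)) =O[halfNhds] fun _ => (1 : ℝ) :=
    (tendsto_fst_halfNhds.mono_right nhdsWithin_le_nhds |>.pow (n - m)).isBigO_one ℝ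
  simpa only [← pow_add, Nat.add_sub_cancel' h, mul_one] using
    (isBigO_refl (fun v : ℝ × ℝ => v.1 ^ m) halfNhds).mul hone

lemma specialFiber_eq_zero_of_isBigO {A : ℝ[X][Y]}
    (hA : evalAt A =O[halfNhds] fun v => v.1) : specialFiber A = 0 := by
  obtain ⟨c, hc⟩ := hA.bound
  have hzero : ∀ᶠ z in 𝓝 (0 : ℝ), (specialFiber A).IsRoot z := by
    filter_upwards [(eventually_swap_iff.1 hc).curry] with z hz
    have hline : Continuous fun t : ℝ => (t, z) := by fun_prop
    have hlhs := (((continuous_evalAt A).comp hline).norm.tendsto 0).mono_left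
      (nhdsWithin_le_nhds (s := Set.Ioi 0))
    have hrhs := ((continuous_norm.const_mul c).tendsto (0 : ℝ)).mono_left
      (nhdsWithin_le_nhds (s := Set.Ioi 0))
    have hle := le_of_tendsto_of_tendsto hlhs hrhs hz
    rw [norm_zero, mul_zero, norm_le_zero_iff] at hle
    rw [Polynomial.IsRoot.def, specialFiber_eval]
    exact hle
  exact Polynomial.eq_zero_of_infinite_isRoot _ (infinite_of_mem_nhds 0 hzero)

lemma C_X_pow_dvd_of_isBigO {A B : ℝ[X][Y]} {k : ℕ}
    (hA : evalAt A =O[halfNhds] evalAt (Polynomial.C (Polynomial.X ^ k) * B)) :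
    Polynomial.C (Polynomial.X ^ k) ∣ A := by
  induction k generalizing A with
  | zero => exact ⟨A, by simp⟩
  | succ k ih =>
    have hB : evalAt (Polynomial.C (Polynomial.X ^ (k + 1)) * B) =O[halfNhds] fun v => v.1 := by
      have hone := (isBigO_refl (fun v : ℝ × ℝ => v.1) halfNhds).mul
        ((tendsto_evalAt_halfNhds (Polynomial.C (Polynomial.X ^ k) * B)).isBigO_one ℝ)
      rw [evalAt_C_X_pow_mul] at hone ⊢
      simpa only [pow_succ', mul_assoc, mul_one] using hone
    obtain ⟨A, rfl⟩ :=
      C_X_dvd_iff_specialFiber_eq_zero.2 (specialFiber_eq_zero_of_isBigO (hA.trans hB))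
    rw [pow_succ', map_mul] at hA ⊢
    rw [mul_assoc, ← pow_one Polynomial.X, evalAt_C_X_pow_mul, evalAt_C_X_pow_mul, pow_one] at hA
    exact mul_dvd_mul_left _ (ih (isBigO_of_fst_pow_mul hA))

/-- The fraction `A / B` is bounded near the origin in the half plane `t > 0`, and its denominator
is bounded below by a multiple of `t ^ K` there. The exponent `K` is what decreases along the
blow-ups. -/
structure BoundedFraction (A B : ℝ[X][Y]) (K : ℕ) : Prop where
  isBigO : evalAt A =O[halfNhds] evalAt B
  pow_isBigO : (fun v : ℝ × ℝ => v.1 ^ K) =O[halfNhds] evalAt B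

lemma tendsto_weighted_halfNhds {N E : ℕ} (hN : 0 < N) (hE : 0 < E) (a : ℝ) :
    Tendsto (fun v : ℝ × ℝ => (v.1 ^ N, v.1 ^ E * (v.2 + a))) halfNhds halfNhds := by
  have hfst := tendsto_fst_halfNhds.mono_right nhdsWithin_le_nhds
  refine (tendsto_nhdsWithin_iff.2 ⟨?_, ?_⟩).prodMk ?_
  · simpa only [zero_pow hN.ne'] using hfst.pow N
  · filter_upwards [eventually_fst_pos_halfNhds] with v hv using pow_pos hv N
  · simpa only [zero_pow hE.ne', zero_mul] using (hfst.pow E).mul (tendsto_snd.add_const a)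

lemma evalAt_taylor_weightedSubst (N E : ℕ) (A : ℝ[X][Y]) (a : ℝ) (v : ℝ × ℝ) :
    evalAt (Polynomial.taylor (Polynomial.C a) (weightedSubst N E A)) v =
      evalAt A (v.1 ^ N, v.1 ^ E * (v.2 + a)) := by
  rw [evalAt, evalEval_taylor_C, evalEval_weightedSubst, evalAt]

namespace BoundedFraction

variable {A B : ℝ[X][Y]} {K : ℕ}

lemma taylor_weightedSubst (h : BoundedFraction A B K) {N E : ℕ} (hN : 0 < N) (hE : 0 < E)
    (a : ℝ) :
    BoundedFraction (Polynomial.taylor (Polynomial.C a) (weightedSubst N E A))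
      (Polynomial.taylor (Polynomial.C a) (weightedSubst N E B)) (N * K) where
  isBigO := by
    simpa only [Function.comp_def, ← evalAt_taylor_weightedSubst] using
      h.isBigO.comp_tendsto (tendsto_weighted_halfNhds hN hE a)
  pow_isBigO := by
    simpa only [Function.comp_def, ← evalAt_taylor_weightedSubst, ← pow_mul] using
      h.pow_isBigO.comp_tendsto (tendsto_weighted_halfNhds hN hE a)

lemma of_C_X_pow_mul {k : ℕ} (h : BoundedFraction (Polynomial.C (Polynomial.X ^ k) * A)
    (Polynomial.C (Polynomial.X ^ k) * B) K) :
    BoundedFraction A B (K - k) where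
  isBigO := by
    have hO := h.isBigO
    rw [evalAt_C_X_pow_mul, evalAt_C_X_pow_mul] at hO
    exact isBigO_of_fst_pow_mul hO
  pow_isBigO := by
    have hO := (isBigO_fst_pow_of_le (le_add_tsub (a := K) (b := k))).trans h.pow_isBigO
    simp only [evalAt_C_X_pow_mul, pow_add] at hO
    exact isBigO_of_fst_pow_mul hO

lemma exists_strictTransform (h : BoundedFraction A B K) {N E k : ℕ} (hN : 0 < N) (hE : 0 < E)
    {B₁ : ℝ[X][Y]} (hB₁ : weightedSubst N E B = Polynomial.C (Polynomial.X ^ k) * B₁) :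
    ∃ A₁, weightedSubst N E A = Polynomial.C (Polynomial.X ^ k) * A₁ ∧
      ∀ a, BoundedFraction (Polynomial.taylor (Polynomial.C a) A₁)
        (Polynomial.taylor (Polynomial.C a) B₁) (N * K - k) := by
  have hdvd : Polynomial.C (Polynomial.X ^ k) ∣ weightedSubst N E A := by
    have hO := (h.taylor_weightedSubst hN hE 0).isBigO
    rw [map_zero, Polynomial.taylor_zero, Polynomial.taylor_zero, hB₁] at hO
    exact C_X_pow_dvd_of_isBigO hO
  obtain ⟨A₁, hA₁⟩ := hdvd
  refine ⟨A₁, hA₁, fun a => of_C_X_pow_mul ?_⟩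
  have ha := h.taylor_weightedSubst hN hE a
  rwa [hA₁, hB₁, Polynomial.taylor_mul, Polynomial.taylor_mul, Polynomial.taylor_C] at ha

lemma pos_of_eval_zero (h : BoundedFraction A B K) (hB : evalAt B 0 = 0) : 0 < K := by
  by_contra! hK
  obtain rfl := Nat.le_zero.1 hK
  have hlim := h.pow_isBigO.trans_tendsto (hB ▸ tendsto_evalAt_halfNhds B)
  simp only [pow_zero, tendsto_const_nhds_iff, one_ne_zero] at hlim

end BoundedFraction

end BoundedFraction

section Arcs

lemma fracEval_strictTransform {A B A₁ B₁ : ℝ[X][Y]} {N E k : ℕ}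
    (hA : weightedSubst N E A = Polynomial.C (Polynomial.X ^ k) * A₁)
    (hB : weightedSubst N E B = Polynomial.C (Polynomial.X ^ k) * B₁) (a : ℝ) {s : ℝ} (hs : s ≠ 0)
    (w : ℝ) :
    fracEval (Polynomial.taylor (Polynomial.C a) A₁) (Polynomial.taylor (Polynomial.C a) B₁)
      (s, w) = fracEval A B (s ^ N, s ^ E * (w + a)) := by
  rw [fracEval, fracEval, ← evalAt_taylor_weightedSubst (v := (s, w)),
    ← evalAt_taylor_weightedSubst (v := (s, w)), hA, hB, Polynomial.taylor_mul,
    Polynomial.taylor_mul, Polynomial.taylor_C, evalAt_C_X_pow_mul, evalAt_C_X_pow_mul,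
    mul_div_mul_left _ _ (pow_ne_zero k hs)]

/-- `d` is the limit of `A / B` along some arc `t = s ^ N`, `z = φ(s)`, `s → 0⁺`, with `φ` a
polynomial, i.e. along a curve `z = φ(t ^ (1 / N))`. -/
def IsArcLimit (A B : ℝ[X][Y]) (d : ℝ) : Prop :=
  ∃ (N : ℕ) (φ : ℝ[X]), 0 < N ∧
    Tendsto (fun s => fracEval A B (s ^ N, φ.eval s)) (𝓝[>] 0) (𝓝 d)

lemma IsArcLimit.of_strictTransform {A B A₁ B₁ : ℝ[X][Y]} {N E k : ℕ} {a d : ℝ} (hN : 0 < N)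
    (hA : weightedSubst N E A = Polynomial.C (Polynomial.X ^ k) * A₁)
    (hB : weightedSubst N E B = Polynomial.C (Polynomial.X ^ k) * B₁)
    (h : IsArcLimit (Polynomial.taylor (Polynomial.C a) A₁)
      (Polynomial.taylor (Polynomial.C a) B₁) d) :
    IsArcLimit A B d := by
  obtain ⟨n, φ, hn, hφ⟩ := h
  refine ⟨n * N, Polynomial.X ^ (n * E) * (φ + Polynomial.C a), Nat.mul_pos hn hN, hφ.congr' ?_⟩
  filter_upwards [self_mem_nhdsWithin] with s hs
  rw [fracEval_strictTransform hA hB a (pow_pos hs n).ne', Polynomial.eval_mul,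
    Polynomial.eval_pow, Polynomial.eval_X, Polynomial.eval_add, Polynomial.eval_C, pow_mul,
    pow_mul]

lemma exists_weighted_coordinates {α : Type*} {l : Filter α} {v : α → ℝ × ℝ}
    (hv : Tendsto v l halfNhds) {N : ℕ} (hN : 0 < N) (E : ℕ) :
    ∃ s w : α → ℝ, Tendsto s l (𝓝[>] 0) ∧ ∀ᶠ i in l, v i = (s i ^ N, s i ^ E * w i) := by
  have hpos : ∀ᶠ i in l, 0 < (v i).1 := hv.eventually eventually_fst_pos_halfNhds
  have hroot : Tendsto (fun i => (v i).1 ^ (N⁻¹ : ℝ)) l (𝓝[>] 0) := by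
    refine tendsto_nhdsWithin_iff.2 ⟨?_, hpos.mono fun i hi => Real.rpow_pos_of_pos hi _⟩
    have hexp : (0 : ℝ) < (N : ℝ)⁻¹ := inv_pos.2 (Nat.cast_pos.2 hN)
    have hfst := (tendsto_fst_halfNhds.comp hv).mono_right nhdsWithin_le_nhds
    simpa only [Function.comp_def, Real.zero_rpow hexp.ne'] using hfst.rpow_const (.inr hexp.le)
  refine ⟨_, fun i => (v i).2 / ((v i).1 ^ (N⁻¹ : ℝ)) ^ E, hroot, hpos.mono fun i hi => ?_⟩
  rw [Real.rpow_inv_natCast_pow hi.le hN.ne', mul_div_cancel₀]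
  exact (pow_pos (Real.rpow_pos_of_pos hi _) E).ne'

section AtInfinity

variable {A B A₁ B₁ : ℝ[X][Y]} {N E m : ℕ} {α : Type*} {l : Filter α} {s w : α → ℝ}

lemma tendsto_coeff_mul_pow_div_pow (hN : 0 < N)
    (hA : weightedSubst N E A = Polynomial.C (Polynomial.X ^ (E * m)) * A₁)
    (hs : Tendsto s l (𝓝[>] 0)) (hw : Tendsto w l (Bornology.cobounded ℝ))
    (hz : Tendsto (fun i => s i ^ E * w i) l (𝓝 0)) (j : ℕ) :
    Tendsto (fun i => (A.coeff j).eval (s i ^ N) * (s i ^ E * w i) ^ j / (s i ^ E * w i) ^ m) l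
      (𝓝 (if m = j then (A.coeff j).coeff 0 else 0)) := by
  have hs0 : Tendsto s l (𝓝 0) := hs.mono_right nhdsWithin_le_nhds
  have hs_ne : ∀ᶠ i in l, s i ≠ 0 :=
    (hs.eventually eventually_mem_nhdsWithin).mono fun _ h => (Set.mem_Ioi.1 h).ne'
  have hw_ne : ∀ᶠ i in l, w i ≠ 0 := hw.eventually (Bornology.eventually_ne_cobounded 0)
  have hcoeff : Tendsto (fun i => (A.coeff j).eval (s i ^ N)) l (𝓝 ((A.coeff j).coeff 0)) := by
    rw [Polynomial.coeff_zero_eq_eval_zero]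
    have hsN := hs0.pow N
    rw [zero_pow hN.ne'] at hsN
    exact ((A.coeff j).continuous.tendsto 0).comp hsN
  rcases lt_trichotomy j m with hj | rfl | hj
  · have hA_j (x : ℝ) : (A.coeff j).eval (x ^ N) * x ^ (E * j) =
        x ^ (E * m) * (A₁.coeff j).eval x := by
      simpa only [weightedSubst_coeff, Polynomial.coeff_C_mul, Polynomial.eval_mul,
        Polynomial.expand_eval, Polynomial.eval_pow, Polynomial.eval_X] using
        congrArg (fun P => (P.coeff j).eval x) hA
    have hlim := ((A₁.coeff j).continuous.tendsto 0 |>.comp hs0).mul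
      ((tendsto_inv₀_cobounded.comp hw).pow (m - j))
    rw [zero_pow (Nat.sub_pos_of_lt hj).ne', mul_zero] at hlim
    rw [if_neg hj.ne']
    refine hlim.congr' ?_
    filter_upwards [hs_ne, hw_ne] with i hsi hwi
    rw [mul_pow, mul_pow, ← pow_mul, ← pow_mul, ← mul_assoc, hA_j, mul_assoc,
      mul_div_mul_left _ _ (pow_ne_zero _ hsi), mul_div_assoc, Function.comp, Function.comp,
      inv_pow, pow_sub₀ _ hwi hj.le, mul_inv, inv_inv, mul_comm (w i ^ m)⁻¹, ← div_eq_mul_inv]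
  · rw [if_pos rfl]
    refine hcoeff.congr' ?_
    filter_upwards [hs_ne, hw_ne] with i hsi hwi
    rw [mul_div_cancel_right₀ _ (pow_ne_zero _ (mul_ne_zero (pow_ne_zero _ hsi) hwi))]
  · have hlim := hcoeff.mul (hz.pow (j - m))
    rw [zero_pow (Nat.sub_pos_of_lt hj).ne', mul_zero] at hlim
    rw [if_neg hj.ne]
    refine hlim.congr' ?_
    filter_upwards [hs_ne, hw_ne] with i hsi hwi
    rw [pow_sub₀ _ (mul_ne_zero (pow_ne_zero _ hsi) hwi) hj.le, mul_div_assoc, div_eq_mul_inv]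

lemma tendsto_evalAt_div_pow (hN : 0 < N)
    (hA : weightedSubst N E A = Polynomial.C (Polynomial.X ^ (E * m)) * A₁)
    (hs : Tendsto s l (𝓝[>] 0)) (hw : Tendsto w l (Bornology.cobounded ℝ))
    (hz : Tendsto (fun i => s i ^ E * w i) l (𝓝 0)) :
    Tendsto (fun i => evalAt A (s i ^ N, s i ^ E * w i) / (s i ^ E * w i) ^ m) l
      (𝓝 ((A.coeff m).coeff 0)) := by
  have hsum := tendsto_finsetSum (Finset.range (A.natDegree + m + 1)) fun j _ =>
    tendsto_coeff_mul_pow_div_pow hN hA hs hw hz j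
  rw [Finset.sum_ite_eq, if_pos (Finset.mem_range.2 (by omega))] at hsum
  refine hsum.congr fun i => ?_
  rw [evalAt, evalEval_eq_sum_range' (n := A.natDegree + m + 1) (by omega), Finset.sum_div]

lemma tendsto_fracEval_of_cobounded (hN : 0 < N)
    (hA : weightedSubst N E A = Polynomial.C (Polynomial.X ^ (E * m)) * A₁)
    (hB : weightedSubst N E B = Polynomial.C (Polynomial.X ^ (E * m)) * B₁)
    (hBm : (B.coeff m).coeff 0 ≠ 0)
    (hs : Tendsto s l (𝓝[>] 0)) (hw : Tendsto w l (Bornology.cobounded ℝ))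
    (hz : Tendsto (fun i => s i ^ E * w i) l (𝓝 0)) :
    Tendsto (fun i => fracEval A B (s i ^ N, s i ^ E * w i)) l
      (𝓝 ((A.coeff m).coeff 0 / (B.coeff m).coeff 0)) := by
  refine ((tendsto_evalAt_div_pow hN hA hs hw hz).div
    (tendsto_evalAt_div_pow hN hB hs hw hz) hBm).congr' ?_
  filter_upwards [hs.eventually eventually_mem_nhdsWithin,
    hw.eventually (Bornology.eventually_ne_cobounded 0)] with i hsi hwi
  exact div_div_div_cancel_right₀ (pow_ne_zero _ (mul_ne_zero (pow_pos hsi E).ne' hwi)) _ _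

/-- The arc `t = r ^ (2 * N)`, `z = r ^ E` has `w = r ^ (-E)` in the coordinates `t = s ^ N`,
`z = s ^ E * w`. -/
lemma isArcLimit_coeff_div_coeff (hN : 0 < N) (hE : 0 < E)
    (hA : weightedSubst N E A = Polynomial.C (Polynomial.X ^ (E * m)) * A₁)
    (hB : weightedSubst N E B = Polynomial.C (Polynomial.X ^ (E * m)) * B₁)
    (hBm : (B.coeff m).coeff 0 ≠ 0) :
    IsArcLimit A B ((A.coeff m).coeff 0 / (B.coeff m).coeff 0) := by
  have hid : Tendsto (fun r : ℝ => r) (𝓝[>] 0) (𝓝 0) := tendsto_id.mono_left nhdsWithin_le_nhds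
  have hs : Tendsto (fun r : ℝ => r ^ 2) (𝓝[>] 0) (𝓝[>] 0) :=
    tendsto_nhdsWithin_iff.2 ⟨by simpa using hid.pow 2,
      eventually_mem_nhdsWithin.mono fun r hr => Set.mem_Ioi.2 (pow_pos hr 2)⟩
  have hw : Tendsto (fun r : ℝ => (r ^ E)⁻¹) (𝓝[>] 0) (Bornology.cobounded ℝ) := by
    refine tendsto_inv₀_nhdsNE_zero.comp (tendsto_nhdsWithin_iff.2 ⟨?_, ?_⟩)
    · simpa only [zero_pow hE.ne'] using hid.pow E
    · exact eventually_mem_nhdsWithin.mono fun r hr => (pow_pos hr E).ne'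
  have hz_eq : ∀ᶠ r : ℝ in 𝓝[>] 0, (r ^ 2) ^ E * (r ^ E)⁻¹ = r ^ E := by
    filter_upwards [self_mem_nhdsWithin] with r hr
    rw [← pow_mul, two_mul, pow_add, mul_inv_cancel_right₀ (pow_pos hr E).ne']
  have hz : Tendsto (fun r : ℝ => (r ^ 2) ^ E * (r ^ E)⁻¹) (𝓝[>] 0) (𝓝 0) := by
    refine Tendsto.congr' (hz_eq.mono fun r hr => hr.symm) ?_
    simpa only [zero_pow hE.ne'] using hid.pow E
  refine ⟨2 * N, Polynomial.X ^ E, by omega,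
    (tendsto_fracEval_of_cobounded hN hA hB hBm hs hw hz).congr' (hz_eq.mono fun r hr => ?_)⟩
  simp only [pow_mul, hr, Polynomial.eval_pow, Polynomial.eval_X]

end AtInfinity

end Arcs

section NewtonAlgorithm

lemma exists_tendsto_nhds_or_tendsto_cobounded {α X : Type*} [PseudoMetricSpace X] [ProperSpace X]
    (l : Ultrafilter α) (w : α → X) :
    (∃ a, Tendsto w l (𝓝 a)) ∨ Tendsto w l (Bornology.cobounded X) := by
  by_cases h : ∃ K : Set X, IsCompact K ∧ ∀ᶠ i in l, w i ∈ K
  · obtain ⟨K, hK, hmem⟩ := h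
    obtain ⟨a, -, ha⟩ := hK.ultrafilter_le_nhds (l.map w) (le_principal_iff.2 hmem)
    exact .inl ⟨a, ha⟩
  · push Not at h
    rw [Metric.cobounded_eq_cocompact]
    refine .inr (hasBasis_cocompact.tendsto_right_iff.2 fun K hK => ?_)
    exact h K hK

variable {A B A₁ B₁ : ℝ[X][Y]} {d : ℝ} {α : Type*}

lemma isArcLimit_of_evalAt_ne_zero {l : Filter α} [l.NeBot] {v : α → ℝ × ℝ}
    (hB : evalAt B 0 ≠ 0) (hv : Tendsto v l halfNhds)
    (hd : Tendsto (fun i => fracEval A B (v i)) l (𝓝 d)) : IsArcLimit A B d := by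
  have hlim : Tendsto (fracEval A B) halfNhds (𝓝 (evalAt A 0 / evalAt B 0)) :=
    (tendsto_evalAt_halfNhds A).div (tendsto_evalAt_halfNhds B) hB
  obtain rfl := tendsto_nhds_unique hd (hlim.comp hv)
  have harc : Tendsto (fun s : ℝ => (s ^ 1, Polynomial.eval s 0)) (𝓝[>] 0) halfNhds := by
    simpa only [pow_one, Polynomial.eval_zero, id] using tendsto_id.prodMk tendsto_const_nhds
  exact ⟨1, 0, one_pos, hlim.comp harc⟩

lemma isArcLimit_of_cobounded {l : Filter α} [l.NeBot] {s w : α → ℝ} {N E m : ℕ}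
    (hN : 0 < N) (hE : 0 < E)
    (hA : weightedSubst N E A = Polynomial.C (Polynomial.X ^ (E * m)) * A₁)
    (hB : weightedSubst N E B = Polynomial.C (Polynomial.X ^ (E * m)) * B₁)
    (hBm : (B.coeff m).coeff 0 ≠ 0)
    (hs : Tendsto s l (𝓝[>] 0)) (hw : Tendsto w l (Bornology.cobounded ℝ))
    (hz : Tendsto (fun i => s i ^ E * w i) l (𝓝 0))
    (hd : Tendsto (fun i => fracEval A B (s i ^ N, s i ^ E * w i)) l (𝓝 d)) :
    IsArcLimit A B d := by
  rw [tendsto_nhds_unique hd (tendsto_fracEval_of_cobounded hN hA hB hBm hs hw hz)]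
  exact isArcLimit_coeff_div_coeff hN hE hA hB hBm

lemma tendsto_fracEval_strictTransform {l : Filter α} {s w : α → ℝ} {N E k : ℕ}
    (hA : weightedSubst N E A = Polynomial.C (Polynomial.X ^ k) * A₁)
    (hB : weightedSubst N E B = Polynomial.C (Polynomial.X ^ k) * B₁) (a : ℝ)
    (hs : Tendsto s l (𝓝[>] 0))
    (hd : Tendsto (fun i => fracEval A B (s i ^ N, s i ^ E * w i)) l (𝓝 d)) :
    Tendsto (fun i => fracEval (Polynomial.taylor (Polynomial.C a) A₁)
      (Polynomial.taylor (Polynomial.C a) B₁) (s i, w i - a)) l (𝓝 d) := by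
  refine hd.congr' ?_
  filter_upwards [hs.eventually self_mem_nhdsWithin] with i hi
  rw [fracEval_strictTransform hA hB a (Set.mem_Ioi.1 hi).ne', sub_add_cancel]

lemma natTrailingDegree_specialFiber_taylor_C {R : Type*} [CommRing R] (B : R[X][Y]) (a : R) :
    (specialFiber (Polynomial.taylor (Polynomial.C a) B)).natTrailingDegree =
      (specialFiber B).rootMultiplicity a := by
  rw [specialFiber_taylor_C, Polynomial.rootMultiplicity_eq_natTrailingDegree,
    Polynomial.taylor_apply]

/-- The Newton–Puiseux algorithm, following the centre of `v`: at each step either the order of the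
special fibre drops, or it does not increase, no ramification occurs, and the exponent `K` drops. -/
theorem isArcLimit_of_tendsto_fracEval {A B : ℝ[X][Y]} {d : ℝ} {l : Ultrafilter α}
    {v : α → ℝ × ℝ} {K : ℕ} (h : BoundedFraction A B K) (hB : specialFiber B ≠ 0)
    (hv : Tendsto v l halfNhds) (hd : Tendsto (fun i => fracEval A B (v i)) l (𝓝 d)) :
    IsArcLimit A B d := by
  by_cases hB0 : evalAt B 0 ≠ 0
  · exact isArcLimit_of_evalAt_ne_zero hB0 hv hd
  rw [not_not] at hB0
  have hK : 0 < K := h.pos_of_eval_zero hB0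
  obtain ⟨m, hm⟩ : ∃ m, (specialFiber B).natTrailingDegree = m := ⟨_, rfl⟩
  have hBm : (B.coeff m).coeff 0 ≠ 0 := by
    rw [← specialFiber_coeff, ← hm]
    exact mt Polynomial.trailingCoeff_eq_zero.1 hB
  have hm_pos : 0 < m := Nat.pos_of_ne_zero fun h0 => hBm <| by
    rw [h0, ← specialFiber_coeff, Polynomial.coeff_zero_eq_eval_zero, specialFiber_eval]
    exact hB0
  obtain ⟨N, E, B₁, hN, hE, hB₁, hB₁_ne, hmult⟩ := exists_newton_step hB hm
  obtain ⟨A₁, hA₁, h₁⟩ := h.exists_strictTransform hN hE hB₁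
  obtain ⟨s, w, hs, hvsw⟩ := exists_weighted_coordinates hv hN E
  have hd := hd.congr' (hvsw.mono fun i hi => congrArg _ hi)
  rcases exists_tendsto_nhds_or_tendsto_cobounded l w with ⟨a, ha⟩ | hw
  · refine .of_strictTransform hN hA₁ hB₁ (isArcLimit_of_tendsto_fracEval (h₁ a) ?_ (hs.prodMk ?_)
      (tendsto_fracEval_strictTransform hA₁ hB₁ a hs hd))
    · rwa [specialFiber_taylor_C, Ne, Polynomial.taylor_eq_zero]
    · simpa only [sub_self] using ha.sub_const a
  · exact isArcLimit_of_cobounded hN hE hA₁ hB₁ hBm hs hw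
      ((tendsto_snd.comp hv).congr' (hvsw.mono fun i hi => congrArg Prod.snd hi)) hd
termination_by ((specialFiber B).natTrailingDegree, K)
decreasing_by
  rw [Prod.lex_def, hm, natTrailingDegree_specialFiber_taylor_C]
  rcases hmult a with hlt | ⟨rfl, hle⟩
  · exact .inl hlt
  · have hEm := Nat.mul_pos hE hm_pos
    rcases hle.lt_or_eq with hlt | heq
    · exact .inl hlt
    · exact .inr ⟨heq, by dsimp only; omega⟩

end NewtonAlgorithm

section Cone

open Asymptotics

lemma fst_pow_isBigO_of_ne_zero {r : ℝ[X]} (hr : r ≠ 0) :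
    ∃ K : ℕ, (fun v : ℝ × ℝ => v.1 ^ K) =O[halfNhds] fun v => r.eval v.1 := by
  obtain ⟨g, hg, hdvd⟩ := Polynomial.exists_eq_pow_rootMultiplicity_mul_and_not_dvd r hr 0
  rw [map_zero, sub_zero] at hg hdvd
  have hg0 : g.eval 0 ≠ 0 := by
    rwa [← Polynomial.coeff_zero_eq_eval_zero, Ne, ← Polynomial.X_dvd_iff]
  have hlim : Tendsto (fun v : ℝ × ℝ => g.eval v.1) halfNhds (𝓝 (g.eval 0)) :=
    (g.continuous.tendsto 0).comp (tendsto_fst_halfNhds.mono_right nhdsWithin_le_nhds)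
  have hone : (fun _ => (1 : ℝ)) =O[halfNhds] fun v : ℝ × ℝ => g.eval v.1 :=
    (isBigO_const_left_iff_pos_le_norm one_ne_zero).2
      ⟨_, half_pos (norm_pos_iff.2 hg0),
        (hlim.norm.eventually_const_lt (half_lt_self (norm_pos_iff.2 hg0))).mono fun _ h => h.le⟩
  refine ⟨r.rootMultiplicity 0, ?_⟩
  have hmul := (isBigO_refl (fun v : ℝ × ℝ => v.1 ^ r.rootMultiplicity 0) halfNhds).mul hone
  simp only [mul_one] at hmul
  refine hmul.congr_right fun v => ?_
  conv_rhs => rw [hg, Polynomial.eval_mul, Polynomial.eval_pow, Polynomial.eval_X]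

/-- Bézout: `r(t) = u A + v B` is `O(B)` since `A` is, and `r(t)` has a finite order at `0`. -/
lemma exists_boundedFraction {A B : ℝ[X][Y]} (hrel : IsRelPrime A B)
    (hAB : evalAt A =O[halfNhds] evalAt B) : ∃ K, BoundedFraction A B K := by
  obtain ⟨a, b, r, hr, hbezout⟩ := exists_mul_add_mul_eq_C_of_isRelPrime hrel
  have mul_isBigO (c : ℝ[X][Y]) {D : ℝ[X][Y]} (hD : evalAt D =O[halfNhds] evalAt B) :
      evalAt (c * D) =O[halfNhds] evalAt B := by
    have hmul : evalAt (c * D) = fun v => evalAt c v * evalAt D v :=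
      funext fun v => Polynomial.evalEval_mul v.1 v.2 c D
    simpa only [hmul, one_mul] using ((tendsto_evalAt_halfNhds c).isBigO_one ℝ).mul hD
  have hr_isBigO : (fun v : ℝ × ℝ => r.eval v.1) =O[halfNhds] evalAt B := by
    refine ((mul_isBigO a hAB).add (mul_isBigO b (isBigO_refl _ _))).congr_left fun v => ?_
    rw [evalAt, evalAt, ← Polynomial.evalEval_add, hbezout, Polynomial.evalEval_C]
  obtain ⟨K, hK⟩ := fst_pow_isBigO_of_ne_zero hr
  exact ⟨K, hAB, hK.trans hr_isBigO⟩

lemma BoundedFraction.ne_zero {A B : ℝ[X][Y]} {K : ℕ} (h : BoundedFraction A B K) : B ≠ 0 := by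
  rintro rfl
  have hzero : ∀ᶠ v : ℝ × ℝ in halfNhds, v.1 ^ K = 0 :=
    h.pow_isBigO.eq_zero_imp.mono fun v hv => hv (Polynomial.evalEval_zero _ _)
  obtain ⟨v, hv, hpos⟩ := (hzero.and eventually_fst_pos_halfNhds).exists
  exact (pow_pos hpos K).ne' hv

lemma exists_arc_of_cone {A B : ℝ[X][Y]} (hrel : IsRelPrime A B)
    (hAB : evalAt A =O[𝓝 0] evalAt B) {α : Type*} {l : Ultrafilter α} {v : α → ℝ × ℝ}
    (hv : Tendsto v l (𝓝 0)) (hpos : ∀ᶠ i in l, 0 < (v i).1)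
    (hcone : ∀ᶠ i in l, |(v i).2| ≤ (v i).1) {d : ℝ}
    (hd : Tendsto (fun i => fracEval A B (v i)) l (𝓝 d)) :
    ∃ (N : ℕ) (ψ : ℝ[X]), 0 < N ∧
      Tendsto (fun s => fracEval A B (s ^ N, s ^ N * ψ.eval s)) (𝓝[>] 0) (𝓝 d) := by
  obtain ⟨K, h⟩ := exists_boundedFraction hrel (hAB.mono halfNhds_le_nhds)
  obtain ⟨k, B₁, hB₁, hB₁_ne⟩ :=
    exists_eq_C_X_pow_mul_specialFiber_ne_zero (weightedSubst_ne_zero one_pos 1 h.ne_zero)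
  obtain ⟨A₁, hA₁, h₁⟩ := h.exists_strictTransform one_pos one_pos hB₁
  rw [Prod.zero_eq_mk] at hv
  have hv_half : Tendsto v l halfNhds :=
    (tendsto_nhdsWithin_iff.2 ⟨hv.fst_nhds, hpos⟩).prodMk hv.snd_nhds
  obtain ⟨s, w, hs, hvsw⟩ := exists_weighted_coordinates hv_half one_pos 1
  have hw : ∀ᶠ i in l, w i ∈ Set.Icc (-1) 1 := by
    filter_upwards [hvsw, hcone, hs.eventually self_mem_nhdsWithin] with i hi hle hsi
    rw [hi, pow_one, abs_mul, abs_of_pos hsi] at hle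
    exact abs_le.1 (le_of_mul_le_mul_left (hle.trans_eq (mul_one _).symm) hsi)
  obtain ⟨c, -, hc⟩ := isCompact_Icc.ultrafilter_le_nhds (l.map w) (le_principal_iff.2 hw)
  obtain ⟨N, φ, hN, hφ⟩ := isArcLimit_of_tendsto_fracEval (h₁ c)
    (by rwa [specialFiber_taylor_C, Ne, Polynomial.taylor_eq_zero])
    (hs.prodMk (by simpa only [sub_self] using Tendsto.sub_const hc c))
    (tendsto_fracEval_strictTransform hA₁ hB₁ c hs
      (hd.congr' (hvsw.mono fun i hi => congrArg _ hi)))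
  refine ⟨N, φ + Polynomial.C c, hN, hφ.congr' ?_⟩
  filter_upwards [self_mem_nhdsWithin] with r hr
  rw [fracEval_strictTransform hA₁ hB₁ c (pow_pos hr N).ne', pow_one, Polynomial.eval_add,
    Polynomial.eval_C]

lemma TypeI.apply_eq_of_abs_eq {Φ : ℝ → ℝ} (hΦ : TypeI Φ) {s t : ℝ} (h : |s| = |t|) :
    Φ s = Φ t := by
  obtain ⟨N, φ, e, -, -, -, hΦ⟩ := hΦ
  rw [hΦ, hΦ, h]

lemma sum_support_eq_sum_orderEmbOfFin (ψ : ℝ[X]) (F : ℕ → ℝ) :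
    ∑ i ∈ ψ.support, F i = ∑ k, F (ψ.support.orderEmbOfFin rfl k) := by
  have h := Finset.sum_map Finset.univ (ψ.support.orderEmbOfFin rfl).toEmbedding F
  rwa [Finset.map_orderEmbOfFin_univ] at h

lemma typeI_abs_mul_eval_rpow_inv {N : ℕ} (hN : 0 < N) (ψ : ℝ[X]) :
    TypeI fun t => |t| * ψ.eval (|t| ^ (N⁻¹ : ℝ)) := by
  have hNpos : (0 : ℚ) < N := Nat.cast_pos.2 hN
  refine ⟨ψ.support.card, fun k => ψ.coeff (ψ.support.orderEmbOfFin rfl k),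
    fun k => 1 + (ψ.support.orderEmbOfFin rfl k : ℚ) / N, fun k => ?_, fun i j hij => ?_,
    fun k => ?_, fun t => ?_⟩
  · exact Polynomial.mem_support_iff.1 (Finset.orderEmbOfFin_mem _ _ k)
  · have hlt := (ψ.support.orderEmbOfFin rfl).strictMono hij
    exact add_lt_add_right (div_lt_div_of_pos_right (Nat.cast_lt.2 hlt) hNpos) 1
  · exact le_add_of_nonneg_right (by positivity)
  · have rpow_eq (i : ℕ) : |t| ^ (1 + (i : ℝ) / N) = |t| * (|t| ^ (N⁻¹ : ℝ)) ^ i := by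
      rw [Real.rpow_add_of_nonneg (abs_nonneg t) zero_le_one (by positivity), Real.rpow_one,
        ← Real.rpow_mul_natCast (abs_nonneg t), inv_mul_eq_div]
    push_cast
    rw [← sum_support_eq_sum_orderEmbOfFin ψ fun i => ψ.coeff i * |t| ^ (1 + (i : ℝ) / N),
      Polynomial.eval_eq_sum, Polynomial.sum_def, Finset.mul_sum]
    exact Finset.sum_congr rfl fun i _ => by rw [rpow_eq, mul_left_comm]

lemma exists_typeI_of_tendsto_arc {X : Type*} {f : ℝ × ℝ → X} {L : Filter X} {N : ℕ} (hN : 0 < N)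
    {ψ : ℝ[X]} (h : Tendsto (fun s => f (s ^ N, s ^ N * ψ.eval s)) (𝓝[>] 0) L) :
    ∃ Φ, TypeI Φ ∧ Tendsto (fun t => f (t, Φ t)) (𝓝[>] 0) L := by
  refine ⟨_, typeI_abs_mul_eval_rpow_inv hN ψ, ?_⟩
  have hexp : (0 : ℝ) < (N : ℝ)⁻¹ := inv_pos.2 (Nat.cast_pos.2 hN)
  have hroot : Tendsto (fun t : ℝ => t ^ (N⁻¹ : ℝ)) (𝓝[>] 0) (𝓝[>] 0) := by
    refine tendsto_nhdsWithin_iff.2 ⟨?_, ?_⟩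
    · have hlim := (Real.continuousAt_rpow_const 0 _ (.inr hexp.le)).tendsto
      rw [Real.zero_rpow hexp.ne'] at hlim
      exact hlim.mono_left nhdsWithin_le_nhds
    · filter_upwards [self_mem_nhdsWithin] with t ht using Real.rpow_pos_of_pos ht _
  refine (h.comp hroot).congr' ?_
  filter_upwards [self_mem_nhdsWithin] with t ht
  rw [Function.comp, Real.rpow_inv_natCast_pow (Set.mem_Ioi.1 ht).le hN.ne', abs_of_pos ht]

theorem exists_typeI_tendsto_of_cone {A B : ℝ[X][Y]} (hrel : IsRelPrime A B)
    (hAB : evalAt A =O[𝓝 0] evalAt B) {α : Type*} {l : Ultrafilter α} {v : α → ℝ × ℝ}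
    (hv : Tendsto v l (𝓝 0)) (hpos : ∀ᶠ i in l, 0 < (v i).1)
    (hcone : ∀ᶠ i in l, |(v i).2| ≤ (v i).1) {d : ℝ}
    (hd : Tendsto (fun i => fracEval A B (v i)) l (𝓝 d)) :
    ∃ Φ, TypeI Φ ∧ Tendsto (fun t => fracEval A B (t, Φ t)) (𝓝[>] 0) (𝓝 d) := by
  obtain ⟨N, ψ, hN, hψ⟩ := exists_arc_of_cone hrel hAB hv hpos hcone hd
  exact exists_typeI_of_tendsto_arc hN hψ

end Cone

section Charts

open Asymptotics

/-- The affine change of coordinates `A(a + σ t, b + z)` of a bivariate polynomial `A(x, y)`. -/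
noncomputable def affineChart {R : Type*} [CommRing R] (σ : R) [Invertible σ] (a b : R) :
    R[X][Y] ≃+* R[X][Y] :=
  (Polynomial.mapEquiv (Polynomial.algEquivCMulXAddC σ a).toRingEquiv).trans
    (Polynomial.taylorEquiv (Polynomial.C b)).toRingEquiv

lemma evalEval_affineChart {R : Type*} [CommRing R] (σ : R) [Invertible σ] (a b : R) (A : R[X][Y])
    (t z : R) : (affineChart σ a b A).evalEval t z = A.evalEval (a + σ * t) (b + z) := by
  have hcomp : (Polynomial.evalRingHom t).comp
      ((Polynomial.algEquivCMulXAddC σ a).toRingEquiv : R[X] →+* R[X]) =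
        Polynomial.evalRingHom (a + σ * t) := by
    ext <;> simp [add_comm]
  calc (affineChart σ a b A).evalEval t z
      = (A.map ((Polynomial.algEquivCMulXAddC σ a).toRingEquiv : R[X] →+* R[X])).evalEval t
          (z + b) := evalEval_taylor_C _ b t z
    _ = A.evalEval (a + σ * t) (b + z) := by
      rw [← Polynomial.map_evalRingHom_eval, Polynomial.map_map, hcomp,
        Polynomial.map_evalRingHom_eval, add_comm b]

lemma isRelPrime_ringEquiv {R S : Type*} [CommSemiring R] [CommSemiring S] (e : R ≃+* S) {a b : R}
    (h : IsRelPrime a b) : IsRelPrime (e a) (e b) :=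
  .of_map e.symm (by simpa only [RingEquiv.symm_apply_apply] using h)

variable {A B : ℝ[X][Y]} {a b d : ℝ} {α : Type*} {l : Ultrafilter α} {v : α → ℝ × ℝ}

lemma exists_typeI_tendsto_of_signed_cone (hrel : IsRelPrime A B)
    (hAB : evalAt A =O[𝓝 (a, b)] evalAt B) (hv : Tendsto v l (𝓝 (a, b)))
    (hd : Tendsto (fun i => fracEval A B (v i)) l (𝓝 d)) {σ : ℝ} (hσ : |σ| = 1)
    (hpos : ∀ᶠ i in l, 0 < σ * ((v i).1 - a))
    (hcone : ∀ᶠ i in l, |(v i).2 - b| ≤ |(v i).1 - a|) {F : Filter ℝ}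
    (hF : Tendsto (fun x => σ * (x - a)) F (𝓝[>] 0)) :
    ∃ Φ, TypeI Φ ∧ Tendsto (fun x => fracEval A B (x, b + Φ (x - a))) F (𝓝 d) := by
  have hσσ : σ * σ = 1 := by rw [← abs_mul_abs_self, hσ, one_mul]
  have abs_mul_sub (x : ℝ) : |σ * (x - a)| = |x - a| := by rw [abs_mul, hσ, one_mul]
  have : Invertible σ := ⟨σ, hσσ, hσσ⟩
  have evalAt_chart (D : ℝ[X][Y]) :
      evalAt (affineChart σ a b D) = fun w => evalAt D (a + σ * w.1, b + w.2) :=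
    funext fun w => evalEval_affineChart σ a b D w.1 w.2
  have frac_chart (x z : ℝ) : fracEval (affineChart σ a b A) (affineChart σ a b B)
      (σ * (x - a), z) = fracEval A B (x, b + z) := by
    simp only [fracEval, evalAt_chart]
    rw [← mul_assoc, hσσ, one_mul, add_sub_cancel]
  have hchart : Tendsto (fun w : ℝ × ℝ => (a + σ * w.1, b + w.2)) (𝓝 0) (𝓝 (a, b)) :=
    Continuous.tendsto' (by fun_prop) _ _ (by simp)
  have hv₀ : Tendsto (fun i => (σ * ((v i).1 - a), (v i).2 - b)) l (𝓝 0) :=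
    (Continuous.tendsto' (f := fun u : ℝ × ℝ => (σ * (u.1 - a), u.2 - b)) (by fun_prop) (a, b) 0
      (by simp)).comp hv
  obtain ⟨Φ, hΦ, hlim⟩ := exists_typeI_tendsto_of_cone
    (isRelPrime_ringEquiv (affineChart σ a b) hrel)
    (by simpa only [evalAt_chart, Function.comp_def] using hAB.comp_tendsto hchart) hv₀ hpos
    (by
      filter_upwards [hpos, hcone] with i hpos_i hcone_i
      rwa [← abs_mul_sub, abs_of_pos hpos_i] at hcone_i)
    (hd.congr fun i => by rw [frac_chart, add_sub_cancel])
  refine ⟨Φ, hΦ, (hlim.comp hF).congr fun x => ?_⟩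
  rw [Function.comp, frac_chart, hΦ.apply_eq_of_abs_eq (abs_mul_sub x)]

theorem exists_typeI_tendsto_of_abs_sub_le (hrel : IsRelPrime A B)
    (hAB : evalAt A =O[𝓝 (a, b)] evalAt B) (hv : Tendsto v l (𝓝 (a, b)))
    (hd : Tendsto (fun i => fracEval A B (v i)) l (𝓝 d)) (hne : ∀ i, v i ≠ (a, b))
    (hcone : ∀ᶠ i in l, |(v i).2 - b| ≤ |(v i).1 - a|) :
    ∃ Φ, TypeI Φ ∧ (Tendsto (fun x => fracEval A B (x, b + Φ (x - a))) (𝓝[>] a) (𝓝 d) ∨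
      Tendsto (fun x => fracEval A B (x, b + Φ (x - a))) (𝓝[<] a) (𝓝 d)) := by
  have hside : ∀ᶠ i in l, 0 < 1 * ((v i).1 - a) ∨ 0 < -1 * ((v i).1 - a) := by
    filter_upwards [hcone] with i hi
    have hx : (v i).1 ≠ a := fun hx => hne i <| Prod.ext hx <| by
      rwa [hx, sub_self, abs_zero, abs_nonpos_iff, sub_eq_zero] at hi
    rcases hx.lt_or_gt with hlt | hgt
    · exact .inr (by linarith)
    · exact .inl (by linarith)
  have hlim (σ : ℝ) : Tendsto (fun x => σ * (x - a)) (𝓝 a) (𝓝 0) :=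
    Continuous.tendsto' (by fun_prop) _ _ (by simp)
  have hright : Tendsto (fun x => 1 * (x - a)) (𝓝[>] a) (𝓝[>] 0) :=
    tendsto_nhdsWithin_iff.2 ⟨(hlim 1).mono_left nhdsWithin_le_nhds,
      eventually_mem_nhdsWithin.mono fun x hx => by simpa using hx⟩
  have hleft : Tendsto (fun x => -1 * (x - a)) (𝓝[<] a) (𝓝[>] 0) :=
    tendsto_nhdsWithin_iff.2 ⟨(hlim (-1)).mono_left nhdsWithin_le_nhds,
      eventually_mem_nhdsWithin.mono fun x hx => by simpa using hx⟩
  rcases Ultrafilter.eventually_or.1 hside with hpos | hpos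
  · obtain ⟨Φ, hΦ, h⟩ :=
      exists_typeI_tendsto_of_signed_cone hrel hAB hv hd (by simp) hpos hcone hright
    exact ⟨Φ, hΦ, .inl h⟩
  · obtain ⟨Φ, hΦ, h⟩ :=
      exists_typeI_tendsto_of_signed_cone hrel hAB hv hd (by simp) hpos hcone hleft
    exact ⟨Φ, hΦ, .inr h⟩

end Charts

section MvPolynomial

open Asymptotics

variable {p q : MvPolynomial (Fin 2) ℝ} {v₀ : ℝ × ℝ}

lemma continuous_pev (p : MvPolynomial (Fin 2) ℝ) : Continuous (pev p) :=
  (MvPolynomial.continuous_eval p).comp (by fun_prop)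

lemma dense_pev_ne_zero (hq : q ≠ 0) : Dense {v | pev q v ≠ 0} := by
  refine dense_iff_inter_open.2 fun U hU ⟨⟨x, y⟩, hxy⟩ => ?_
  obtain ⟨s, hs, t, ht, hst⟩ := mem_nhds_prod_iff.1 (hU.mem_nhds hxy)
  by_contra! hempty
  refine hq (MvPolynomial.funext_set ![s, t] (fun i => ?_) fun w hw => ?_)
  · fin_cases i
    exacts [infinite_of_mem_nhds x hs, infinite_of_mem_nhds y ht]
  · have hw_eta : ![w 0, w 1] = w := by
      ext i
      fin_cases i <;> rfl
    have hzero : pev q (w 0, w 1) = 0 := by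
      by_contra hne
      exact Set.eq_empty_iff_forall_notMem.1 hempty _
        ⟨hst (Set.mk_mem_prod (hw 0 trivial) (hw 1 trivial)), hne⟩
    rwa [pev, hw_eta, ← map_zero (MvPolynomial.eval w)] at hzero

lemma isBigO_of_boundedNear (hq : q ≠ 0) (hb : BoundedNear p q v₀) :
    pev p =O[𝓝 v₀] pev q := by
  obtain ⟨U, hU, M, hM⟩ := hb
  refine IsBigO.of_bound M ?_
  filter_upwards [interior_mem_nhds.2 hU] with v hv
  have hclosed : IsClosed {v | ‖pev p v‖ ≤ M * ‖pev q v‖} :=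
    isClosed_le (continuous_pev p).norm ((continuous_pev q).norm.const_mul M)
  refine closure_minimal ?_ hclosed
    ((dense_pev_ne_zero hq).open_subset_closure_inter isOpen_interior hv)
  rintro w ⟨hwU, hwq⟩
  have hle := hM w (interior_subset hwU) hwq
  rwa [abs_div, div_le_iff₀ (abs_pos.2 hwq)] at hle

lemma evalAt_equivMvPolynomial_symm (p : MvPolynomial (Fin 2) ℝ) :
    evalAt ((Polynomial.Bivariate.equivMvPolynomial ℝ).symm p) = pev p := by
  funext v
  have hcomp : (Polynomial.evalEvalRingHom v.1 v.2).comp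
      ((Polynomial.Bivariate.equivMvPolynomial ℝ).symm : MvPolynomial (Fin 2) ℝ →+* ℝ[X][Y]) =
        MvPolynomial.eval ![v.1, v.2] := by
    refine MvPolynomial.ringHom_ext (fun r => by simp) fun i => ?_
    fin_cases i <;> simp
  exact congrArg (fun f => f p) hcomp

lemma evalAt_swap (A : ℝ[X][Y]) (v : ℝ × ℝ) :
    evalAt (Polynomial.Bivariate.swap A) v = evalAt A v.swap := by
  rw [evalAt, evalAt, ← Polynomial.coe_aevalAeval_eq_evalEval,
    ← Polynomial.coe_aevalAeval_eq_evalEval]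
  exact Polynomial.Bivariate.aevalAeval_swap v.1 v.2 A

end MvPolynomial

/-- Every limiting value of a bounded rational function at `(x₀,y₀)` is attained as a
one-sided limit along some type (i) curve (in one of the four one-sided directions). -/
theorem limval_attained_on_typeI_curve (p q : MvPolynomial (Fin 2) ℝ) (hq : q ≠ 0)
    (hcop : ∀ d : MvPolynomial (Fin 2) ℝ, d ∣ p → d ∣ q → IsUnit d) (x₀ y₀ : ℝ)
    (hb : BoundedNear p q (x₀, y₀)) (d : ℝ) (hd : d ∈ LimVals p q (x₀, y₀)) :
    ∃ Φ : ℝ → ℝ, TypeI Φ ∧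
      (Tendsto (fun x => pev p (x, y₀ + Φ (x - x₀)) / pev q (x, y₀ + Φ (x - x₀)))
          (𝓝[>] x₀) (𝓝 d) ∨
       Tendsto (fun x => pev p (x, y₀ + Φ (x - x₀)) / pev q (x, y₀ + Φ (x - x₀)))
          (𝓝[<] x₀) (𝓝 d) ∨
       Tendsto (fun y => pev p (x₀ + Φ (y - y₀), y) / pev q (x₀ + Φ (y - y₀), y))
          (𝓝[>] y₀) (𝓝 d) ∨
       Tendsto (fun y => pev p (x₀ + Φ (y - y₀), y) / pev q (x₀ + Φ (y - y₀), y))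
          (𝓝[<] y₀) (𝓝 d)) := by
  obtain ⟨v, hv, hne, -, hlim⟩ := hd
  replace hv := hv.mono_left Nat.hyperfilter_le_atTop
  replace hlim := hlim.mono_left Nat.hyperfilter_le_atTop
  have hbig := isBigO_of_boundedNear hq hb
  have hcone : ∀ᶠ n in (hyperfilter ℕ : Filter ℕ),
      |(v n).2 - y₀| ≤ |(v n).1 - x₀| ∨ |(v n).1 - x₀| ≤ |(v n).2 - y₀| :=
    .of_forall fun n => le_total _ _
  let e := (Polynomial.Bivariate.equivMvPolynomial ℝ).symm.toRingEquiv
  let e' := e.trans (Polynomial.Bivariate.swap (R := ℝ)).toRingEquiv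
  have he (r) : evalAt (e r) = pev r := evalAt_equivMvPolynomial_symm r
  have he' (r) : evalAt (e' r) = fun v => pev r v.swap :=
    funext fun v => (evalAt_swap (e r) v).trans (congrFun (he r) v.swap)
  rcases Ultrafilter.eventually_or.1 hcone with hx | hy
  · obtain ⟨Φ, hΦ, h⟩ := exists_typeI_tendsto_of_abs_sub_le (isRelPrime_ringEquiv e hcop)
      (by rwa [he, he]) hv (by simpa only [fracEval, he] using hlim) hne hx
    simp only [fracEval, he] at h
    exact ⟨Φ, hΦ, h.elim .inl (.inr ∘ .inl)⟩
  · obtain ⟨Φ, hΦ, h⟩ := exists_typeI_tendsto_of_abs_sub_le (isRelPrime_ringEquiv e' hcop)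
      (by rw [he', he']; exact hbig.comp_tendsto (continuous_swap.tendsto (y₀, x₀)))
      ((continuous_swap.tendsto _).comp hv) (by simpa only [fracEval, he'] using! hlim)
      (fun n => Prod.swap_injective.ne (hne n)) hy
    simp only [fracEval, he', Prod.swap_prod_mk] at h
    exact ⟨Φ, hΦ, .inr (.inr h)⟩
end

section
/- Let f = p/q be a rational function of two real variables, let (x₀,y₀) ∈ ℝ² and let a ∈ ℝ. Then f(v) → a as v → (x₀,y₀) through points v ≠ (x₀,y₀) with q(v) ≠ 0, if and only if for every function Φ of type (i) one has lim_{x→x₀} f(x, y₀+Φ(x−x₀)) = a and lim_{y→y₀} f(x₀+Φ(y−y₀), y) = a, where each limit is taken through points where q is nonzero. -/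
open MvPolynomial Filter Topology

/-!
The polynomial `r = q ^ 2 * ((p - a * q) ^ 2 - ε ^ 2 * q ^ 2)` is positive exactly where `p / q` is
defined and differs from `a` by more than `ε`. So the claim is that if a polynomial is positive at
points arbitrarily close to `(x₀, y₀)`, then it is so along some type (i) curve.

In suitable coordinates, `r` becomes some `R(t, s)` which is positive at points `|s| ≤ t` with `t`
arbitrarily small. Let `y(t)` maximize `R(t, ·)` on `[-t, t]`, so that `R(t, y(t)) > 0` for
arbitrarily small `t`. Being an endpoint or a critical point, `y` is algebraic over the polynomials
in `t`. Along an ultrafilter refining `t → 0⁺` on which `R(t, y(t)) > 0`, this value is `Θ(t ^ β)`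
for some rational `β`, and `y` can be approximated to any order by Puiseux polynomials `Φ`. As soon
as `y - Φ = o(t ^ β)`, the positivity passes from `y` to the type (i) function `Φ`.

The approximations arise by subtracting leading terms one after the other, which could fail only if
the exponents stayed bounded. But then, by induction through the derivatives in the second variable,
every polynomial `P ≠ 0` would have one exact order `P(t, ξ(t)) = Θ(t ^ β)` for all `ξ` near `y`,
contradicting that `y` is algebraic.
-/

open Asymptotics Set
open scoped Polynomial Polynomial.Bivariate

section Ultrafilter

variable {ι E F : Type*} [NormedAddCommGroup E] [NormedAddCommGroup F] {l : Ultrafilter ι}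

theorem isBigO_or_isLittleO_of_ultrafilter (f : ι → E) (g : ι → F) : f =O[l] g ∨ g =o[l] f := by
  refine or_iff_not_imp_left.2 fun h => isLittleO_iff.2 fun c hc => ?_
  have hlt : ∀ᶠ i in (l : Filter ι), ¬‖f i‖ ≤ c⁻¹ * ‖g i‖ :=
    Ultrafilter.eventually_not.2 fun hle => h (.of_bound _ hle)
  filter_upwards [hlt] with i hi
  rw [not_le, inv_mul_lt_iff₀ hc] at hi
  exact hi.le

theorem isLittleO_or_isLittleO_or_isTheta_of_ultrafilter (f : ι → E) (g : ι → F) :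
    f =o[l] g ∨ g =o[l] f ∨ f =Θ[l] g := by
  rcases isBigO_or_isLittleO_of_ultrafilter (l := l) f g with hfg | hgf
  · rcases isBigO_or_isLittleO_of_ultrafilter (l := l) g f with hgf | hfg
    exacts [.inr (.inr ⟨hfg, hgf⟩), .inl hfg]
  · exact .inr (.inl hgf)

theorem exists_sub_const_mul_isLittleO {𝕜 : Type*} [NormedField 𝕜] [ProperSpace 𝕜]
    {f g : ι → 𝕜} (h : f =O[l] g) : ∃ c : 𝕜, (fun i => f i - c * g i) =o[l] g := by
  obtain ⟨C, hC⟩ := h.bound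
  have hmem : ∀ᶠ i in (l : Filter ι), f i / g i ∈ Metric.closedBall (0 : 𝕜) |C| := by
    filter_upwards [hC] with i hi
    rw [mem_closedBall_zero_iff, norm_div]
    refine div_le_of_le_mul₀ (norm_nonneg _) (abs_nonneg _) (hi.trans ?_)
    gcongr
    exact le_abs_self C
  obtain ⟨c, -, hc⟩ :=
    (isCompact_closedBall (0 : 𝕜) |C|).ultrafilter_le_nhds (l.map fun i => f i / g i)
      (le_principal_iff.2 hmem)
  have hc : Tendsto (fun i => f i / g i) l (𝓝 c) := hc
  refine ⟨c, isLittleO_iff_exists_eq_mul.2 ⟨fun i => f i / g i - c, ?_, ?_⟩⟩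
  · simpa using hc.sub_const c
  · filter_upwards [hC] with i hi
    rcases eq_or_ne (g i) 0 with h0 | h0
    · simpa [h0] using hi
    · simp [sub_mul, h0]

end Ultrafilter

section PowersNearZero

theorem tendsto_rpow_nhdsGT_zero {a : ℝ} (ha : 0 < a) :
    Tendsto (fun t : ℝ => t ^ a) (𝓝[>] 0) (𝓝[>] 0) := by
  refine tendsto_nhdsWithin_iff.2 ⟨?_, ?_⟩
  · have := (Real.continuousAt_rpow_const 0 a (.inr ha.le)).tendsto
    rw [Real.zero_rpow ha.ne'] at this
    exact this.mono_left nhdsWithin_le_nhds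
  · filter_upwards [self_mem_nhdsWithin] with t (ht : 0 < t)
    exact Real.rpow_pos_of_pos ht a

theorem isLittleO_rpow_rpow_nhdsGT_zero {a b : ℝ} (h : a < b) :
    (fun t : ℝ => t ^ b) =o[𝓝[>] 0] fun t => t ^ a := by
  refine isLittleO_iff_exists_eq_mul.2 ⟨_,
    (tendsto_rpow_nhdsGT_zero (sub_pos.2 h)).mono_right nhdsWithin_le_nhds, ?_⟩
  filter_upwards [self_mem_nhdsWithin] with t (ht : 0 < t)
  simp [← Real.rpow_add ht]

theorem isBigO_rpow_rpow_nhdsGT_zero {a b : ℝ} (h : a ≤ b) :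
    (fun t : ℝ => t ^ b) =O[𝓝[>] 0] fun t => t ^ a := by
  rcases h.eq_or_lt with rfl | h
  exacts [isBigO_refl _ _, (isLittleO_rpow_rpow_nhdsGT_zero h).isBigO]

variable {l : Filter ℝ}

theorem eventually_pos_of_le_nhdsGT_zero (hl : l ≤ 𝓝[>] 0) : ∀ᶠ t in l, 0 < t :=
  hl self_mem_nhdsWithin

theorem eventually_ne_zero_of_isTheta_rpow (hl : l ≤ 𝓝[>] 0) {f : ℝ → ℝ} {a : ℝ}
    (h : f =Θ[l] fun t => t ^ a) : ∀ᶠ t in l, f t ≠ 0 := by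
  filter_upwards [h.eq_zero_iff, eventually_pos_of_le_nhdsGT_zero hl] with t h0 ht
  exact mt h0.1 (Real.rpow_pos_of_pos ht a).ne'

theorem rpow_mul_rpow_eventuallyEq (hl : l ≤ 𝓝[>] 0) (a b : ℝ) :
    (fun t => t ^ a * t ^ b) =ᶠ[l] fun t => t ^ (a + b) := by
  filter_upwards [eventually_pos_of_le_nhdsGT_zero hl] with t ht
  exact (Real.rpow_add ht a b).symm

variable [l.NeBot]

theorem isBigO_rpow_rpow_iff (hl : l ≤ 𝓝[>] 0) {a b : ℝ} :
    ((fun t => t ^ a) =O[l] fun t => t ^ b) ↔ b ≤ a := by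
  refine ⟨fun h => ?_, fun h => (isBigO_rpow_rpow_nhdsGT_zero h).mono hl⟩
  by_contra! hab
  refine isLittleO_irrefl (Eventually.frequently ?_)
    (h.trans_isLittleO ((isLittleO_rpow_rpow_nhdsGT_zero hab).mono hl))
  exact eventually_ne_zero_of_isTheta_rpow hl (isTheta_refl _ _)

theorem isLittleO_rpow_rpow_iff (hl : l ≤ 𝓝[>] 0) {a b : ℝ} :
    ((fun t => t ^ a) =o[l] fun t => t ^ b) ↔ b < a := by
  refine ⟨fun h => ?_, fun h => (isLittleO_rpow_rpow_nhdsGT_zero h).mono hl⟩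
  by_contra! hab
  refine isLittleO_irrefl (Eventually.frequently ?_)
    (h.trans_isBigO ((isBigO_rpow_rpow_nhdsGT_zero hab).mono hl))
  exact eventually_ne_zero_of_isTheta_rpow hl (isTheta_refl _ _)

theorem isTheta_rpow_rpow_iff (hl : l ≤ 𝓝[>] 0) {a b : ℝ} :
    ((fun t => t ^ a) =Θ[l] fun t => t ^ b) ↔ a = b := by
  rw [IsTheta, isBigO_rpow_rpow_iff hl, isBigO_rpow_rpow_iff hl, and_comm, le_antisymm_iff]

end PowersNearZero

section PolynomialOrder

theorem exists_eval_isTheta_pow {𝕜 : Type*} [NormedField 𝕜] {F : 𝕜[X]} (hF : F ≠ 0) :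
    ∃ m : ℕ, (fun t => F.eval t) =Θ[𝓝 0] fun t => t ^ m := by
  obtain ⟨G, hG, hdvd⟩ := Polynomial.exists_eq_pow_rootMultiplicity_mul_and_not_dvd F hF 0
  have hG0 : G.eval 0 ≠ 0 := mt Polynomial.dvd_iff_isRoot.2 hdvd
  have heval (t : 𝕜) : F.eval t = t ^ F.rootMultiplicity 0 * G.eval t := by
    conv_lhs => rw [hG]
    simp
  have hGΘ : (fun t => G.eval t) =Θ[𝓝 0] fun _ => (1 : 𝕜) :=
    (isTheta_of_div_tendsto_nhds_ne_zero (by simpa using G.continuous.tendsto 0) hG0).symm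
  refine ⟨F.rootMultiplicity 0, ?_⟩
  simpa [heval] using (isTheta_refl (fun t : 𝕜 => t ^ F.rootMultiplicity 0) (𝓝 0)).mul hGΘ

theorem rpow_inv_natCast_pow_eq_rpow_div {t : ℝ} (ht : 0 ≤ t) (D m : ℕ) :
    (t ^ (D : ℝ)⁻¹) ^ m = t ^ ((m : ℝ) / D) := by
  rw [← Real.rpow_mul_natCast ht, inv_mul_eq_div]

theorem exists_eval_rpow_isTheta_rpow {D : ℕ} (hD : 0 < D) {F : ℝ[X]} (hF : F ≠ 0) :
    ∃ m : ℕ, (fun t => F.eval (t ^ (D : ℝ)⁻¹)) =Θ[𝓝[>] 0] fun t => t ^ ((m : ℝ) / D) := by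
  obtain ⟨m, hm⟩ := exists_eval_isTheta_pow hF
  have hroot : Tendsto (fun t : ℝ => t ^ (D : ℝ)⁻¹) (𝓝[>] 0) (𝓝 0) :=
    (tendsto_rpow_nhdsGT_zero (by positivity)).mono_right nhdsWithin_le_nhds
  refine ⟨m, IsTheta.trans_eventuallyEq
    ⟨hm.isBigO.comp_tendsto hroot, hm.isBigO_symm.comp_tendsto hroot⟩ ?_⟩
  filter_upwards [self_mem_nhdsWithin] with t (ht : 0 < t)
  exact rpow_inv_natCast_pow_eq_rpow_div ht.le D m

end PolynomialOrder

section AlgebraicGerms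

/-- The germ of `z` along `l` is algebraic over the polynomials in the coordinate `t`. -/
def IsAlgebraicAlong (l : Filter ℝ) (z : ℝ → ℝ) : Prop :=
  ∃ H : ℝ[X][Y], H ≠ 0 ∧ ∀ᶠ t in l, H.evalEval t (z t) = 0

/-- Germs of real functions along `l` as an algebra over `ℝ[X]`, with `X` acting as the identity
function. Along an ultrafilter they form a field, so the closure properties of algebraic elements
apply to functions. -/
noncomputable abbrev germPolynomialAlgebra (l : Filter ℝ) : Algebra ℝ[X] (Germ l ℝ) :=
  ((Germ.coeRingHom l).comp (RingHom.pi Polynomial.evalRingHom)).toAlgebra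

attribute [local instance] germPolynomialAlgebra

theorem aeval_coe_germ (l : Filter ℝ) (z : ℝ → ℝ) (P : ℝ[X][Y]) :
    Polynomial.aeval (z : Germ l ℝ) P = ((fun t => P.evalEval t (z t) : ℝ → ℝ) : Germ l ℝ) := by
  have heval : P.eval₂ (RingHom.pi Polynomial.evalRingHom) z = fun t => P.evalEval t (z t) := by
    funext t
    rw [← Polynomial.eval₂_evalRingHom]
    exact Polynomial.hom_eval₂ P _ (Pi.evalRingHom (fun _ : ℝ => ℝ) t) z
  rw [← heval]
  exact (Polynomial.hom_eval₂ P _ (Germ.coeRingHom l) z).symm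

theorem isAlgebraicAlong_iff_isAlgebraic {l : Filter ℝ} {z : ℝ → ℝ} :
    IsAlgebraicAlong l z ↔ IsAlgebraic ℝ[X] (z : Germ l ℝ) := by
  refine exists_congr fun H => and_congr_right fun _ => ?_
  rw [aeval_coe_germ]
  exact Germ.coe_eq.symm

theorem IsAlgebraicAlong.mono {l₁ l₂ : Filter ℝ} {z : ℝ → ℝ} (hz : IsAlgebraicAlong l₂ z)
    (h : l₁ ≤ l₂) : IsAlgebraicAlong l₁ z :=
  hz.imp fun _ hH => ⟨hH.1, hH.2.filter_mono h⟩

theorem IsAlgebraicAlong.congr {l : Filter ℝ} {z w : ℝ → ℝ} (hz : IsAlgebraicAlong l z)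
    (h : z =ᶠ[l] w) : IsAlgebraicAlong l w := by
  obtain ⟨H, hH, hHz⟩ := hz
  exact ⟨H, hH, by filter_upwards [hHz, h] with t ht hzw; rwa [← hzw]⟩

variable {l : Ultrafilter ℝ} {z w : ℝ → ℝ}

theorem IsAlgebraicAlong.sub (hz : IsAlgebraicAlong l z) (hw : IsAlgebraicAlong l w) :
    IsAlgebraicAlong l fun t => z t - w t := by
  rw [isAlgebraicAlong_iff_isAlgebraic] at hz hw ⊢
  exact hz.sub hw

theorem IsAlgebraicAlong.evalEval (hz : IsAlgebraicAlong l z) (P : ℝ[X][Y]) :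
    IsAlgebraicAlong l fun t => P.evalEval t (z t) := by
  rw [isAlgebraicAlong_iff_isAlgebraic] at hz ⊢
  rw [← aeval_coe_germ]
  exact Algebra.adjoin_le (S := Subalgebra.algebraicClosure ℝ[X] (Germ (l : Filter ℝ) ℝ))
    (Set.singleton_subset_iff.2 hz) (Polynomial.aeval_mem_adjoin_singleton _ _)

theorem isAlgebraicAlong_rpow_inv (hl : ↑l ≤ 𝓝[>] (0 : ℝ)) {D : ℕ} (hD : 0 < D) :
    IsAlgebraicAlong l fun t => t ^ (D : ℝ)⁻¹ := by
  refine ⟨Polynomial.X ^ D - Polynomial.C Polynomial.X,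
    Polynomial.X_pow_sub_C_ne_zero hD _, ?_⟩
  filter_upwards [eventually_pos_of_le_nhdsGT_zero hl] with t ht
  simp [Polynomial.evalEval_C, Real.rpow_inv_natCast_pow ht.le hD.ne']

end AlgebraicGerms

section LeadingExponent

variable {l : Ultrafilter ℝ} {z : ℝ → ℝ}

theorem exists_isTheta_rpow_of_isTheta_pow_mul_pow {l : Filter ℝ} (hl : l ≤ 𝓝[>] 0) {a m b : ℕ}
    (hb : b ≠ 0) (h : (fun t => t ^ m) =Θ[l] fun t => t ^ a * z t ^ b) :
    ∃ r : ℚ, z =Θ[l] fun t => t ^ (r : ℝ) := by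
  refine ⟨(m - a) / b, ?_⟩
  have hpow : (z ^ b : ℝ → ℝ) =Θ[l] ((fun t => t ^ ((((m - a) / b : ℚ)) : ℝ)) ^ b : ℝ → ℝ) := by
    refine EventuallyEq.trans_isTheta ?_ <|
      (h.symm.div (isTheta_refl (fun t : ℝ => t ^ a) l)).trans_eventuallyEq ?_
    · filter_upwards [eventually_pos_of_le_nhdsGT_zero hl] with t ht
      simp [ht.ne']
    · filter_upwards [eventually_pos_of_le_nhdsGT_zero hl] with t ht
      rw [Pi.pow_apply, ← Real.rpow_mul_natCast ht.le]
      push_cast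
      rw [div_mul_cancel₀ _ (by positivity), Real.rpow_sub ht, Real.rpow_natCast, Real.rpow_natCast]
  exact ⟨hpow.isBigO.of_pow hb, hpow.isBigO_symm.of_pow hb⟩

-- As `t ^ m` and `t ^ a * z ^ b` never tie, each step of Horner's scheme has a dominant term.
theorem exists_evalEval_isTheta_pow_mul_pow (hl : ↑l ≤ 𝓝[>] (0 : ℝ))
    (hz : ∀ a m b : ℕ, b ≠ 0 → ¬(fun t => t ^ m) =Θ[l] fun t => t ^ a * z t ^ b) (G : ℝ[X][Y]) :
    G ≠ 0 → ∃ a b : ℕ, (G.coeff 0 = 0 → b ≠ 0) ∧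
      (fun t => G.evalEval t (z t)) =Θ[l] fun t => t ^ a * z t ^ b := by
  induction G using Polynomial.recOnHorner with
  | M0 => simp
  | MC G c hG0 hc ih =>
    intro _
    obtain ⟨m, hm⟩ := exists_eval_isTheta_pow hc
    replace hm := hm.mono (hl.trans nhdsWithin_le_nhds)
    have hcoeff : (G + Polynomial.C c).coeff 0 ≠ 0 := by simpa [hG0] using hc
    simp only [Polynomial.evalEval_add, Polynomial.evalEval_C]
    rcases eq_or_ne G 0 with rfl | hG
    · exact ⟨m, 0, fun h => absurd h hcoeff, by simpa using hm⟩
    obtain ⟨a, b, hb, hab⟩ := ih hG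
    rcases isLittleO_or_isLittleO_or_isTheta_of_ultrafilter (l := l)
      (fun t => t ^ m) (fun t => t ^ a * z t ^ b) with h | h | h
    · exact ⟨a, b, fun h => absurd h hcoeff, hab.add_isLittleO (hm.trans_isLittleO h)⟩
    · refine ⟨m, 0, fun h => absurd h hcoeff, ?_⟩
      simpa [Pi.add_def] using (hab.trans_isLittleO h).add_isTheta hm
    · exact absurd h (hz _ _ _ (hb hG0))
  | MX G hG ih =>
    intro _
    obtain ⟨a, b, -, hab⟩ := ih hG
    refine ⟨a, b + 1, fun _ => b.succ_ne_zero, ?_⟩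
    simpa [pow_succ, mul_assoc] using hab.mul (isTheta_refl z (l : Filter ℝ))

theorem IsAlgebraicAlong.exists_isTheta_rpow (hl : ↑l ≤ 𝓝[>] (0 : ℝ)) (hz : IsAlgebraicAlong l z)
    (hz0 : ∀ᶠ t in l, z t ≠ 0) : ∃ r : ℚ, z =Θ[l] fun t => t ^ (r : ℝ) := by
  by_contra hcon
  obtain ⟨H, hH, hHz⟩ := hz
  obtain ⟨a, b, -, hab⟩ := exists_evalEval_isTheta_pow_mul_pow hl
    (fun a m b hb h => hcon (exists_isTheta_rpow_of_isTheta_pow_mul_pow hl hb h)) H hH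
  obtain ⟨t, hiff, hHt, hzt, ht⟩ := (hab.eq_zero_iff.and
    (hHz.and (hz0.and (eventually_pos_of_le_nhdsGT_zero hl)))).exists
  exact mul_ne_zero (pow_ne_zero a ht.ne') (pow_ne_zero b hzt) (hiff.1 hHt)

end LeadingExponent

section PuiseuxPolynomials

/-- Puiseux polynomials in `|t|` of denominator `D`, all of whose exponents are at least `1`:
finite sums of terms `c |t| ^ (n / D)` with `D ≤ n`. -/
def IsPuiseuxPoly (D : ℕ) (Φ : ℝ → ℝ) : Prop :=
  ∃ F : ℝ[X], Polynomial.X ^ D ∣ F ∧ ∀ t, Φ t = F.eval (|t| ^ (D : ℝ)⁻¹)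

namespace IsPuiseuxPoly

variable {D : ℕ} {Φ : ℝ → ℝ}

protected theorem zero (D : ℕ) : IsPuiseuxPoly D 0 :=
  ⟨0, dvd_zero _, by simp⟩

theorem add_monomial (hΦ : IsPuiseuxPoly D Φ) {n : ℕ} (hn : D ≤ n) (c : ℝ) :
    IsPuiseuxPoly D fun t => Φ t + c * |t| ^ ((n : ℝ) / D) := by
  obtain ⟨F, hF, hΦF⟩ := hΦ
  refine ⟨F + Polynomial.C c * Polynomial.X ^ n, dvd_add hF ((pow_dvd_pow _ hn).mul_left _),
    fun t => ?_⟩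
  simp [hΦF, rpow_inv_natCast_pow_eq_rpow_div (abs_nonneg t)]

theorem mul_denominator (hΦ : IsPuiseuxPoly D Φ) {k : ℕ} (hk : 0 < k) :
    IsPuiseuxPoly (D * k) Φ := by
  obtain ⟨F, ⟨G, rfl⟩, hΦF⟩ := hΦ
  refine ⟨Polynomial.expand ℝ k (Polynomial.X ^ D * G),
    ⟨Polynomial.expand ℝ k G, by simp [← pow_mul, mul_comm]⟩, fun t => ?_⟩
  have hdiv : (k : ℝ) / (D * k : ℕ) = (D : ℝ)⁻¹ := by
    rw [Nat.cast_mul, mul_comm, div_mul_cancel_left₀ (by positivity)]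
  rw [Polynomial.expand_eval, rpow_inv_natCast_pow_eq_rpow_div (abs_nonneg t), hdiv, hΦF]

theorem exists_add_rpow (hD : 0 < D) (hΦ : IsPuiseuxPoly D Φ) {r : ℚ} (hr : 1 ≤ r) (c : ℝ) :
    ∃ D', 0 < D' ∧ IsPuiseuxPoly D' fun t => Φ t + c * |t| ^ (r : ℝ) := by
  lift r to ℚ≥0 using zero_le_one.trans hr
  have hden : r.den ≤ r.num := by
    rw [← NNRat.num_div_den r] at hr
    exact_mod_cast (one_le_div (by exact_mod_cast r.den_pos)).1 hr
  refine ⟨D * r.den, by positivity, ?_⟩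
  convert (hΦ.mul_denominator r.den_pos).add_monomial (Nat.mul_le_mul_left D hden) c using 5
  rw [Nat.cast_mul, Nat.cast_mul, mul_div_mul_left _ _ (by positivity), NNRat.cast_def]
  push_cast
  rfl

theorem isBigO_id (hD : 0 < D) (hΦ : IsPuiseuxPoly D Φ) : Φ =O[𝓝 0] fun t => t := by
  obtain ⟨F, ⟨G, rfl⟩, hΦF⟩ := hΦ
  have hG : Continuous fun t : ℝ => G.eval (|t| ^ (D : ℝ)⁻¹) :=
    G.continuous.comp (continuous_abs.rpow_const fun _ => .inr (by positivity))
  have hbound := (isBigO_refl (fun t : ℝ => t) (𝓝 0)).abs_left.mul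
    ((hG.continuousAt (x := 0)).isBigO_one ℝ)
  simpa [funext hΦF, Real.rpow_inv_natCast_pow (abs_nonneg _) hD.ne'] using hbound

theorem isAlgebraicAlong (hD : 0 < D) (hΦ : IsPuiseuxPoly D Φ) {l : Ultrafilter ℝ}
    (hl : ↑l ≤ 𝓝[>] (0 : ℝ)) : IsAlgebraicAlong l Φ := by
  obtain ⟨F, -, hΦF⟩ := hΦ
  refine ((isAlgebraicAlong_rpow_inv hl hD).evalEval (F.map Polynomial.C)).congr ?_
  filter_upwards [eventually_pos_of_le_nhdsGT_zero hl] with t ht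
  rw [Polynomial.evalEval_map_C, hΦF, abs_of_pos ht]

theorem exists_evalEval_eq (hD : 0 < D) (hΦ : IsPuiseuxPoly D Φ) (P : ℝ[X][Y]) :
    ∃ G : ℝ[X], ∀ t > 0, P.evalEval t (Φ t) = G.eval (t ^ (D : ℝ)⁻¹) := by
  obtain ⟨F, -, hΦF⟩ := hΦ
  refine ⟨P.eval₂ (Polynomial.expand ℝ D : ℝ[X] →+* ℝ[X]) F, fun t ht => ?_⟩
  have hcomp : (Polynomial.evalRingHom (t ^ (D : ℝ)⁻¹)).comp
      (Polynomial.expand ℝ D : ℝ[X] →+* ℝ[X]) = Polynomial.evalRingHom t := by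
    ext <;> simp [Real.rpow_inv_natCast_pow ht.le hD.ne']
  rw [hΦF, abs_of_pos ht, ← Polynomial.eval₂_evalRingHom, ← hcomp]
  exact (Polynomial.hom_eval₂ P _ (Polynomial.evalRingHom (t ^ (D : ℝ)⁻¹)) F).symm

theorem evalEval_eventuallyEq_zero_or_isTheta (hD : 0 < D) (hΦ : IsPuiseuxPoly D Φ)
    (P : ℝ[X][Y]) : (∀ᶠ t in 𝓝[>] 0, P.evalEval t (Φ t) = 0) ∨
      ∃ m : ℕ, (fun t => P.evalEval t (Φ t)) =Θ[𝓝[>] 0] fun t => t ^ ((m : ℝ) / D) := by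
  obtain ⟨G, hG⟩ := hΦ.exists_evalEval_eq hD P
  have hG : (fun t => P.evalEval t (Φ t)) =ᶠ[𝓝[>] 0] fun t => G.eval (t ^ (D : ℝ)⁻¹) :=
    eventually_nhdsWithin_of_forall hG
  rcases eq_or_ne G 0 with rfl | hG0
  · exact .inl (hG.mono fun t ht => by simpa using ht)
  · exact .inr ((exists_eval_rpow_isTheta_rpow hD hG0).imp fun m hm => hG.trans_isTheta hm)

protected theorem typeI (hD : 0 < D) (hΦ : IsPuiseuxPoly D Φ) : TypeI Φ := by
  obtain ⟨F, hF, hΦF⟩ := hΦ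
  set e := F.support.orderEmbOfFin rfl
  have he (k) : F.coeff (e k) ≠ 0 :=
    Polynomial.mem_support_iff.1 (F.support.orderEmbOfFin_mem rfl k)
  have hD' : (0 : ℚ) < D := by exact_mod_cast hD
  refine ⟨F.support.card, fun k => F.coeff (e k), fun k => (e k : ℚ) / D, he, ?_, ?_, fun t => ?_⟩
  · exact fun i j hij => div_lt_div_of_pos_right (by exact_mod_cast e.strictMono hij) hD'
  · intro k
    rw [one_le_div hD']
    exact_mod_cast not_lt.1 fun hlt => he k (Polynomial.X_pow_dvd_iff.1 hF _ hlt)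
  · rw [hΦF, Polynomial.eval_eq_sum, Polynomial.sum]
    conv_lhs => rw [← F.support.map_orderEmbOfFin_univ rfl, Finset.sum_map]
    exact Finset.sum_congr rfl fun k _ => by
      simp [e, rpow_inv_natCast_pow_eq_rpow_div (abs_nonneg t)]

end IsPuiseuxPoly

end PuiseuxPolynomials

section PuiseuxApproximation

theorem evalEval_eq_eval_map {A : Type*} [CommSemiring A] (P : A[X][Y]) (x s : A) :
    P.evalEval x s = (P.map (Polynomial.evalRingHom x)).eval s := by
  rw [Polynomial.eval_map, Polynomial.eval₂_evalRingHom]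

theorem exists_evalEval_sub_eq_derivative_mul (P : ℝ[X][Y]) (x a b : ℝ) :
    ∃ η ∈ uIcc a b,
      P.evalEval x b - P.evalEval x a = P.derivative.evalEval x η * (b - a) := by
  simp only [evalEval_eq_eval_map, ← Polynomial.derivative_map]
  generalize P.map (Polynomial.evalRingHom x) = p
  wlog hab : a < b generalizing a b
  · rcases (not_lt.1 hab).eq_or_lt with rfl | hba
    · exact ⟨b, left_mem_uIcc, by simp⟩
    · obtain ⟨η, hη, h⟩ := this b a hba
      exact ⟨η, uIcc_comm b a ▸ hη, by linarith⟩
  obtain ⟨η, hη, h⟩ := exists_deriv_eq_slope (fun s => p.eval s) hab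
    p.continuous.continuousOn p.differentiable.differentiableOn
  refine ⟨η, Ioo_subset_Icc_self.trans Icc_subset_uIcc hη, ?_⟩
  rw [← Polynomial.deriv, h, div_mul_cancel₀ _ (sub_pos.2 hab).ne']

/-- `P(t, ξ(t))` has the exact order `t ^ β` for all functions `ξ` within `O(t ^ r)` of `y`. -/
def HasOrderNear (l : Filter ℝ) (y : ℝ → ℝ) (P : ℝ[X][Y]) (r β : ℝ) : Prop :=
  ∀ ξ : ℝ → ℝ, (y - ξ) =O[l] (fun t => t ^ r) →
    (fun t => P.evalEval t (ξ t)) =Θ[l] fun t => t ^ β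

/-- A Puiseux polynomial approximates `y` so well that `P` has a well-defined order there. -/
def IsStableNear (l : Filter ℝ) (y : ℝ → ℝ) (P : ℝ[X][Y]) : Prop :=
  ∃ (D : ℕ) (Φ : ℝ → ℝ) (r β : ℝ), 0 < D ∧ IsPuiseuxPoly D Φ ∧
    (y - Φ) =O[l] (fun t => t ^ r) ∧ HasOrderNear l y P r β

/-- Approximability of `y` by Puiseux polynomials to the order `t ^ M`. -/
def PuiseuxApproximable (l : Filter ℝ) (y : ℝ → ℝ) (M : ℝ) : Prop :=
  ∃ (D : ℕ) (Φ : ℝ → ℝ), 0 < D ∧ IsPuiseuxPoly D Φ ∧ (y - Φ) =O[l] fun t => t ^ M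

section Order

variable {l : Filter ℝ} {y : ℝ → ℝ} {P : ℝ[X][Y]} {r r' β : ℝ} {D : ℕ} {Φ Ψ : ℝ → ℝ}

theorem HasOrderNear.mono (hl : l ≤ 𝓝[>] 0) (h : HasOrderNear l y P r β) (hr : r ≤ r') :
    HasOrderNear l y P r' β :=
  fun ξ hξ => h ξ (hξ.trans ((isBigO_rpow_rpow_nhdsGT_zero hr).mono hl))

theorem HasOrderNear.evalEval_sub_isTheta (h : HasOrderNear l y P.derivative r β) {ξ ζ : ℝ → ℝ}
    (hξ : (y - ξ) =O[l] fun t => t ^ r) (hζ : (y - ζ) =O[l] fun t => t ^ r) :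
    (fun t => P.evalEval t (ζ t) - P.evalEval t (ξ t)) =Θ[l] fun t => t ^ β * (ζ - ξ) t := by
  choose η hη hmv using fun t => exists_evalEval_sub_eq_derivative_mul P t (ξ t) (ζ t)
  have hζξ : (ζ - ξ) =O[l] fun t => t ^ r := by simpa [Pi.sub_def] using hξ.sub hζ
  have hηξ : (η - ξ) =O[l] (ζ - ξ) :=
    .of_bound 1 (.of_forall fun t => by simpa using abs_sub_left_of_mem_uIcc (hη t))
  have hyη : (y - η) =O[l] fun t => t ^ r := by simpa [Pi.sub_def] using hξ.sub (hηξ.trans hζξ)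
  simpa [hmv] using (h η hyη).mul (isTheta_refl (ζ - ξ) l)

theorem HasOrderNear.evalEval_isBigO (hl : l ≤ 𝓝[>] 0) (h : HasOrderNear l y P.derivative r β)
    (hP : ¬IsStableNear l y P) (hD : 0 < D) (hΦ : IsPuiseuxPoly D Φ)
    (hyΦ : (y - Φ) =O[l] fun t => t ^ r) :
    (fun t => P.evalEval t (Φ t)) =O[l] fun t => t ^ (β + r) := by
  rcases hΦ.evalEval_eventuallyEq_zero_or_isTheta hD P with h0 | ⟨m, hm⟩
  · exact (EventuallyEq.isBigO (h0.filter_mono hl)).trans (isBigO_zero _ _)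
  replace hm := hm.mono hl
  rcases le_or_gt (β + r) (m / D) with hle | hlt
  · exact hm.isBigO.trans ((isBigO_rpow_rpow_nhdsGT_zero hle).mono hl)
  refine absurd ⟨D, Φ, r, m / D, hD, hΦ, hyΦ, fun ξ hyξ => ?_⟩ hP
  have hξΦ : (ξ - Φ) =O[l] fun t => t ^ r := by simpa [Pi.sub_def] using hyΦ.sub hyξ
  have hdiff : (fun t => P.evalEval t (ξ t) - P.evalEval t (Φ t)) =o[l] fun t => t ^ (m / D : ℝ) :=
    calc
      _ =O[l] fun t => t ^ β * (ξ - Φ) t := (h.evalEval_sub_isTheta hyΦ hyξ).isBigO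
      _ =O[l] fun t => t ^ β * t ^ r := (isBigO_refl _ l).mul hξΦ
      _ =ᶠ[l] fun t => t ^ (β + r) := rpow_mul_rpow_eventuallyEq hl β r
      _ =o[l] fun t => t ^ (m / D : ℝ) := (isLittleO_rpow_rpow_nhdsGT_zero hlt).mono hl
  simpa [Pi.add_def] using hm.add_isLittleO hdiff

theorem HasOrderNear.evalEval_isTheta (hl : l ≤ 𝓝[>] 0) (h : HasOrderNear l y P.derivative r β)
    (hP : ¬IsStableNear l y P) (hyΦ : (y - Φ) =Θ[l] fun t => t ^ r)
    (hD : 0 < D) (hΨ : IsPuiseuxPoly D Ψ) (hyΨ : (y - Ψ) =O[l] fun t => t ^ r') (hr : r < r') :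
    (fun t => P.evalEval t (Φ t)) =Θ[l] fun t => t ^ (β + r) := by
  have hlt := (isLittleO_rpow_rpow_nhdsGT_zero hr).mono hl
  have hΦΨ : (Φ - Ψ) =Θ[l] fun t => t ^ r := by
    have hΨΦ := hyΦ.add_isLittleO (hyΨ.trans_isLittleO hlt).neg_left
    exact (IsTheta.of_norm_eventuallyEq_norm (.of_eq (by ext; simp [abs_sub_comm]))).trans hΨΦ
  have hdiff : (fun t => P.evalEval t (Φ t) - P.evalEval t (Ψ t)) =Θ[l] fun t => t ^ (β + r) :=
    calc
      _ =Θ[l] fun t => t ^ β * (Φ - Ψ) t :=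
        h.evalEval_sub_isTheta (hyΨ.trans hlt.isBigO) hyΦ.isBigO
      _ =Θ[l] fun t => t ^ β * t ^ r := (isTheta_refl _ l).mul hΦΨ
      _ =ᶠ[l] fun t => t ^ (β + r) := rpow_mul_rpow_eventuallyEq hl β r
  have hΨval := ((h.mono hl hr.le).evalEval_isBigO hl hP hD hΨ hyΨ).trans_isLittleO
    ((isLittleO_rpow_rpow_nhdsGT_zero (add_lt_add_right hr β)).mono hl)
  simpa [Pi.add_def] using hΨval.add_isTheta hdiff

theorem IsPuiseuxPoly.exists_eq_div_of_evalEval_isTheta [l.NeBot] (hl : l ≤ 𝓝[>] 0) (hD : 0 < D)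
    (hΦ : IsPuiseuxPoly D Φ) (h : (fun t => P.evalEval t (Φ t)) =Θ[l] fun t => t ^ r) :
    ∃ m : ℕ, r = m / D := by
  rcases hΦ.evalEval_eventuallyEq_zero_or_isTheta hD P with h0 | ⟨m, hm⟩
  · obtain ⟨t, ht, ht'⟩ :=
      ((h0.filter_mono hl).and (eventually_ne_zero_of_isTheta_rpow hl h)).exists
    exact absurd ht ht'
  · exact ⟨m, (isTheta_rpow_rpow_iff hl).1 (h.symm.trans (hm.mono hl))⟩

end Order

variable {l : Ultrafilter ℝ} {y : ℝ → ℝ} {P : ℝ[X][Y]} {M : ℝ}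

theorem exists_leading_term (hl : ↑l ≤ 𝓝[>] (0 : ℝ)) (hy : IsAlgebraicAlong l y)
    (hyO : y =O[l] fun t => t) (hM : ¬PuiseuxApproximable l y M) {D : ℕ} (hD : 0 < D)
    {Φ : ℝ → ℝ} (hΦ : IsPuiseuxPoly D Φ) :
    ∃ (r : ℚ) (c : ℝ), 1 ≤ r ∧ r < M ∧ (y - Φ) =Θ[l] (fun t => t ^ (r : ℝ)) ∧
      (y - fun t => Φ t + c * |t| ^ (r : ℝ)) =o[l] fun t => t ^ (r : ℝ) := by
  have hyΦ : ∀ {r}, M ≤ r → ¬(y - Φ) =O[l] fun t => t ^ r := fun hr h =>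
    hM ⟨D, Φ, hD, hΦ, h.trans ((isBigO_rpow_rpow_iff hl).2 hr)⟩
  have hne : ∀ᶠ t in (l : Filter ℝ), y t - Φ t ≠ 0 := by
    refine Ultrafilter.eventually_not.2 fun h0 => hyΦ le_rfl ?_
    exact (EventuallyEq.isBigO h0).trans (isBigO_zero _ _)
  obtain ⟨r, hr⟩ := (hy.sub (hΦ.isAlgebraicAlong hD hl)).exists_isTheta_rpow hl hne
  obtain ⟨c, hc⟩ := exists_sub_const_mul_isLittleO hr.isBigO
  refine ⟨r, c, ?_, not_le.1 fun h => hyΦ h hr.isBigO, hr, ?_⟩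
  · have hΦO := (hΦ.isBigO_id hD).mono (hl.trans nhdsWithin_le_nhds)
    have h1 : (fun t : ℝ => t ^ (r : ℝ)) =O[l] fun t => t ^ (1 : ℝ) := by
      simpa using hr.isBigO_symm.trans (hyO.sub hΦO)
    exact_mod_cast (isBigO_rpow_rpow_iff hl).1 h1
  · refine EventuallyEq.trans_isLittleO ?_ hc
    filter_upwards [eventually_pos_of_le_nhdsGT_zero hl] with t ht
    simp [abs_of_pos ht, sub_sub]

-- Denominators do not grow: `P(t, Φ(t))` has order `b / D + r`, where `r` is the order of `y - Φ`,
-- and its exponents lie in `ℕ / D`.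
theorem HasOrderNear.exists_leading_exponent_eq_div (hl : ↑l ≤ 𝓝[>] (0 : ℝ))
    (hy : IsAlgebraicAlong l y) (hyO : y =O[l] fun t => t) (hM : ¬PuiseuxApproximable l y M)
    (hP : ¬IsStableNear l y P) {D b : ℕ} (hD : 0 < D) {ρ : ℝ}
    (h : HasOrderNear l y P.derivative ρ (b / D)) {Φ : ℝ → ℝ} (hΦ : IsPuiseuxPoly D Φ)
    (hyΦ : (y - Φ) =O[l] fun t => t ^ ρ) :
    ∃ (n : ℕ) (c : ℝ), D ≤ n ∧ ρ ≤ n / D ∧ (n / D : ℝ) < M ∧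
      (y - Φ) =Θ[l] (fun t => t ^ (n / D : ℝ)) ∧
      (y - fun t => Φ t + c * |t| ^ (n / D : ℝ)) =o[l] fun t => t ^ (n / D : ℝ) := by
  obtain ⟨r, c, hr1, hrM, hr, hc⟩ := exists_leading_term hl hy hyO hM hD hΦ
  have hρr : ρ ≤ r := (isBigO_rpow_rpow_iff hl).1 (hr.isBigO_symm.trans hyΦ)
  obtain ⟨D', hD', hΦ'⟩ := hΦ.exists_add_rpow hD hr1 c
  obtain ⟨r', -, -, -, hr', -⟩ := exists_leading_term hl hy hyO hM hD' hΦ'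
  have hrr' : (r : ℝ) < r' := (isLittleO_rpow_rpow_iff hl).1 (hr'.isBigO_symm.trans_isLittleO hc)
  have hval := (h.mono hl hρr).evalEval_isTheta hl hP hr hD' hΦ' hr'.isBigO hrr'
  obtain ⟨m, hm⟩ := hΦ.exists_eq_div_of_evalEval_isTheta hl hD hval
  have hDpos : (0 : ℝ) < D := by exact_mod_cast hD
  have hmr : (m : ℝ) = b + r * D := by field_simp at hm; linarith
  have hbm : b + D ≤ m := by
    have : (1 : ℝ) ≤ r := by exact_mod_cast hr1
    exact_mod_cast (by nlinarith : (b : ℝ) + D ≤ m)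
  have hrn : (r : ℝ) = (m - b : ℕ) / D := by
    rw [Nat.cast_sub (by omega), hmr]
    field_simp
    ring
  rw [hrn] at hρr hrM hr hc
  exact ⟨m - b, c, by omega, hρr, hrM, hr, hc⟩

theorem IsStableNear.of_derivative (hl : ↑l ≤ 𝓝[>] (0 : ℝ)) (hy : IsAlgebraicAlong l y)
    (hyO : y =O[l] fun t => t) (hM : ¬PuiseuxApproximable l y M)
    (hP' : IsStableNear l y P.derivative) : IsStableNear l y P := by
  -- Otherwise the orders of `y - Φ` would increase in `ℕ / D` forever, while staying below `M`.
  by_contra hP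
  obtain ⟨D, Φ₀, ρ, β, hD, hΦ₀, hyΦ₀, hβ⟩ := hP'
  obtain ⟨b, rfl⟩ := hΦ₀.exists_eq_div_of_evalEval_isTheta hl hD (hβ Φ₀ hyΦ₀)
  have hDpos : (0 : ℝ) < D := by exact_mod_cast hD
  let S : Set ℕ := {n | ρ ≤ n / D ∧
    ∃ Φ, IsPuiseuxPoly D Φ ∧ (y - Φ) =O[l] fun t => t ^ (n / D : ℝ)}
  have hlead {Φ : ℝ → ℝ} (hΦ : IsPuiseuxPoly D Φ) {σ : ℝ} (hσ : ρ ≤ σ)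
      (hyΦ : (y - Φ) =O[l] fun t => t ^ σ) :=
    (hβ.mono hl hσ).exists_leading_exponent_eq_div hl hy hyO hM hP hD hΦ hyΦ
  have hne : S.Nonempty := by
    obtain ⟨n, -, -, hn, -, hΘ, -⟩ := hlead hΦ₀ le_rfl hyΦ₀
    exact ⟨n, hn, Φ₀, hΦ₀, hΘ.isBigO⟩
  have hbdd : BddAbove S := by
    refine ⟨⌈M * D⌉₊, ?_⟩
    rintro n ⟨-, Φ, hΦ, hyΦ⟩
    have hnM : (n / D : ℝ) < M := not_le.1 fun h => hM ⟨D, Φ, hD, hΦ,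
      hyΦ.trans ((isBigO_rpow_rpow_iff hl).2 h)⟩
    exact_mod_cast ((div_lt_iff₀ hDpos).1 hnM).le.trans (Nat.le_ceil _)
  obtain ⟨n, ⟨hρn, Φ, hΦ, hyΦ⟩, hmax⟩ := hbdd.exists_isGreatest_of_nonempty hne
  obtain ⟨n₁, c, hDn₁, hn₁, -, -, ho⟩ := hlead hΦ hρn hyΦ
  obtain ⟨n₂, -, -, -, -, hΘ, -⟩ :=
    hlead (hΦ.add_monomial hDn₁ c) (hρn.trans hn₁) ho.isBigO
  have hn₂ : (n₁ / D : ℝ) < n₂ / D :=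
    (isLittleO_rpow_rpow_iff hl).1 (hΘ.isBigO_symm.trans_isLittleO ho)
  have hle : n₂ ≤ n := hmax ⟨hρn.trans (hn₁.trans hn₂.le), _, hΦ.add_monomial hDn₁ c, hΘ.isBigO⟩
  have hlt : n < n₂ := by
    exact_mod_cast (div_lt_div_iff_of_pos_right hDpos).1 (hn₁.trans_lt hn₂)
  exact hle.not_gt hlt

theorem isStableNear_of_ne_zero (hl : ↑l ≤ 𝓝[>] (0 : ℝ)) (hy : IsAlgebraicAlong l y)
    (hyO : y =O[l] fun t => t) (hM : ¬PuiseuxApproximable l y M) (hP : P ≠ 0) :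
    IsStableNear l y P := by
  induction hn : P.natDegree generalizing P with
  | zero =>
    obtain ⟨F, rfl⟩ := Polynomial.natDegree_eq_zero.1 hn
    obtain ⟨m, hm⟩ := exists_eval_isTheta_pow (Polynomial.C_ne_zero.1 hP)
    refine ⟨1, 0, 1, m, one_pos, .zero 1, by simpa using hyO, fun ξ _ => ?_⟩
    simpa [Polynomial.evalEval_C] using hm.mono (hl.trans nhdsWithin_le_nhds)
  | succ n ih =>
    refine .of_derivative hl hy hyO hM (ih (fun h => ?_) ?_)
    · rw [Polynomial.derivative_eq_zero.1 h] at hn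
      simp at hn
    · rw [Polynomial.natDegree_derivative, hn, Nat.add_sub_cancel]

theorem IsAlgebraicAlong.puiseuxApproximable (hl : ↑l ≤ 𝓝[>] (0 : ℝ))
    (hy : IsAlgebraicAlong l y) (hyO : y =O[l] fun t => t) (M : ℝ) :
    PuiseuxApproximable l y M := by
  by_contra hM
  obtain ⟨H, hH, hHy⟩ := id hy
  obtain ⟨-, -, r, β, -, -, -, hβ⟩ := isStableNear_of_ne_zero hl hy hyO hM hH
  have hord := hβ y (sub_self y ▸ isBigO_zero _ _)
  obtain ⟨t, ht, ht'⟩ := (hHy.and (eventually_ne_zero_of_isTheta_rpow hl hord)).exists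
  exact ht' ht

end PuiseuxApproximation

section CurveSelection

theorem continuous_evalEval {A : Type*} [CommSemiring A] [TopologicalSpace A]
    [IsTopologicalSemiring A] (P : A[X][Y]) : Continuous fun v : A × A => P.evalEval v.1 v.2 := by
  induction P using Polynomial.induction_on' with
  | add P Q hP hQ =>
    simp only [Polynomial.evalEval_add]
    exact hP.add hQ
  | monomial n F =>
    simp only [Polynomial.evalEval, Polynomial.eval_monomial, Polynomial.eval_mul,
      Polynomial.eval_pow, Polynomial.eval_C]
    exact (F.continuous.comp continuous_fst).mul (continuous_snd.pow n)

theorem evalEval_sub_isBigO_sub {l : Filter ℝ} {x₀ y₀ : ℝ} (hl : l ≤ 𝓝 x₀) (P : ℝ[X][Y])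
    {ξ ζ : ℝ → ℝ} (hξ : Tendsto ξ l (𝓝 y₀)) (hζ : Tendsto ζ l (𝓝 y₀)) :
    (fun t => P.evalEval t (ζ t) - P.evalEval t (ξ t)) =O[l] (ζ - ξ) := by
  choose η hη hmv using fun t => exists_evalEval_sub_eq_derivative_mul P t (ξ t) (ζ t)
  have hη₀ : Tendsto η l (𝓝 y₀) := by
    refine tendsto_of_tendsto_of_tendsto_of_le_of_le (by simpa using hξ.min hζ)
      (by simpa using hξ.max hζ) (fun t => (hη t).1) fun t => (hη t).2
  have hP' := (((continuous_evalEval P.derivative).tendsto (x₀, y₀)).comp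
    ((tendsto_id'.2 hl).prodMk_nhds hη₀)).isBigO_one ℝ
  simpa [hmv, Pi.sub_def] using hP'.mul (isBigO_refl (ζ - ξ) l)

theorem exists_isAlgebraicAlong_isMaxOn_Icc (R : ℝ[X][Y]) :
    ∃ y : ℝ → ℝ, IsAlgebraicAlong (𝓝[>] 0) y ∧
      ∀ t > 0, y t ∈ Icc (-t) t ∧ IsMaxOn (R.evalEval t) (Icc (-t) t) (y t) := by
  rcases eq_or_ne R.derivative 0 with hR' | hR'
  · obtain ⟨F, rfl⟩ := Polynomial.natDegree_eq_zero.1 (Polynomial.derivative_eq_zero.1 hR')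
    refine ⟨0, ⟨Polynomial.X, Polynomial.X_ne_zero, by simp⟩, fun t ht => ⟨by simp [ht.le], ?_⟩⟩
    simp [IsMaxOn, IsMaxFilter, Polynomial.evalEval_C]
  have hmax (t : ℝ) : ∃ s, 0 < t → s ∈ Icc (-t) t ∧ IsMaxOn (R.evalEval t) (Icc (-t) t) s := by
    rcases le_or_gt t 0 with ht | ht
    · exact ⟨0, fun h => absurd h ht.not_gt⟩
    · obtain ⟨s, hs⟩ := isCompact_Icc.exists_isMaxOn (nonempty_Icc.2 (by linarith : -t ≤ t))
        ((continuous_evalEval R).comp (Continuous.prodMk_right t)).continuousOn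
      exact ⟨s, fun _ => hs⟩
  choose y hy using hmax
  -- The maximum is attained at an endpoint or at a critical point of `R(t, ·)`.
  refine ⟨y, ⟨R.derivative * (Polynomial.X ^ 2 - Polynomial.C (Polynomial.X ^ 2)),
    mul_ne_zero hR' (Polynomial.X_pow_sub_C_ne_zero two_pos _), ?_⟩, hy⟩
  filter_upwards [self_mem_nhdsWithin] with t (ht : 0 < t)
  obtain ⟨hmem, hmax⟩ := hy t ht
  rw [Polynomial.evalEval_mul, mul_eq_zero]
  rcases eq_endpoints_or_mem_Ioo_of_mem_Icc hmem with h | h | h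
  · exact .inr (by simp [h, Polynomial.evalEval_C])
  · exact .inr (by simp [h, Polynomial.evalEval_C])
  · left
    have hderiv := (hmax.isLocalMax (Icc_mem_nhds h.1 h.2)).deriv_eq_zero
    rwa [funext (evalEval_eq_eval_map R t), Polynomial.deriv, Polynomial.derivative_map,
      ← evalEval_eq_eval_map] at hderiv

theorem exists_typeI_frequently_pos_of_isAlgebraicAlong {R : ℝ[X][Y]} {y : ℝ → ℝ}
    (hy : IsAlgebraicAlong (𝓝[>] 0) y) (hyO : y =O[𝓝[>] 0] fun t => t)
    (hpos : ∃ᶠ t in 𝓝[>] 0, 0 < R.evalEval t (y t)) :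
    ∃ Φ : ℝ → ℝ, TypeI Φ ∧ ∃ᶠ t in 𝓝[>] 0, 0 < R.evalEval t (Φ t) := by
  obtain ⟨l, hl, hlpos⟩ : ∃ l : Ultrafilter ℝ, ↑l ≤ 𝓝[>] (0 : ℝ) ∧
      ∀ᶠ t in l, 0 < R.evalEval t (y t) := by
    have : (𝓝[>] (0 : ℝ) ⊓ 𝓟 {t | 0 < R.evalEval t (y t)}).NeBot :=
      frequently_mem_iff_neBot.1 hpos
    obtain ⟨l, hl⟩ := Ultrafilter.exists_le (𝓝[>] (0 : ℝ) ⊓ 𝓟 {t | 0 < R.evalEval t (y t)})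
    exact ⟨l, hl.trans inf_le_left, le_principal_iff.1 (hl.trans inf_le_right)⟩
  replace hy := hy.mono hl
  replace hyO := hyO.mono hl
  have hl0 : (l : Filter ℝ) ≤ 𝓝 0 := hl.trans nhdsWithin_le_nhds
  obtain ⟨β, hβ⟩ := (hy.evalEval R).exists_isTheta_rpow hl (hlpos.mono fun _ h => h.ne')
  obtain ⟨D, Φ, hD, hΦ, hyΦ⟩ := hy.puiseuxApproximable hl hyO (β + 1)
  have hΦ0 : Tendsto Φ l (𝓝 0) := ((hΦ.isBigO_id hD).mono hl0).trans_tendsto hl0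
  have hdiff : (fun t => R.evalEval t (y t) - R.evalEval t (Φ t)) =o[l]
      fun t => R.evalEval t (y t) :=
    calc
      _ =O[l] (y - Φ) := evalEval_sub_isBigO_sub hl0 R hΦ0 (hyO.trans_tendsto hl0)
      _ =O[l] fun t => t ^ ((β : ℝ) + 1) := hyΦ
      _ =o[l] fun t => t ^ (β : ℝ) := (isLittleO_rpow_rpow_iff hl).2 (lt_add_one _)
      _ =Θ[l] fun t => R.evalEval t (y t) := hβ.symm
  refine ⟨Φ, hΦ.typeI hD, Frequently.filter_mono (Eventually.frequently ?_) hl⟩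
  filter_upwards [hlpos, hdiff.def one_half_pos] with t hpos hle
  rw [Real.norm_eq_abs, Real.norm_of_nonneg hpos.le] at hle
  linarith [le_abs_self (R.evalEval t (y t) - R.evalEval t (Φ t))]

theorem exists_typeI_frequently_pos {R : ℝ[X][Y]}
    (hR : ∃ᶠ v : ℝ × ℝ in 𝓝 (0, 0), 0 < v.1 ∧ |v.2| ≤ v.1 ∧ 0 < R.evalEval v.1 v.2) :
    ∃ Φ : ℝ → ℝ, TypeI Φ ∧ ∃ᶠ t in 𝓝[>] 0, 0 < R.evalEval t (Φ t) := by
  obtain ⟨y, hy, hmax⟩ := exists_isAlgebraicAlong_isMaxOn_Icc R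
  have hyO : y =O[𝓝[>] 0] fun t => t := by
    refine .of_bound 1 (eventually_nhdsWithin_of_forall fun t (ht : 0 < t) => ?_)
    simpa [abs_of_pos ht] using abs_le.2 (hmax t ht).1
  refine exists_typeI_frequently_pos_of_isAlgebraicAlong hy hyO fun hneg => ?_
  have hneg' : ∀ᶠ v : ℝ × ℝ in 𝓝 (0, 0), 0 < v.1 → ¬0 < R.evalEval v.1 (y v.1) :=
    (continuous_fst.tendsto ((0, 0) : ℝ × ℝ)).eventually (eventually_nhdsWithin_iff.1 hneg)
  obtain ⟨v, ⟨hv1, hv2, hpos⟩, hv⟩ := (hR.and_eventually hneg').exists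
  exact hv hv1 (hpos.trans_le ((hmax v.1 hv1).2 (abs_le.1 hv2)))

end CurveSelection

section TypeIGraphs

namespace TypeI

variable {Φ : ℝ → ℝ}

protected theorem even (hΦ : TypeI Φ) : Φ.Even := by
  obtain ⟨N, φ, e, -, -, -, hΦ⟩ := hΦ
  intro t
  simp only [hΦ, abs_neg]

protected theorem continuous (hΦ : TypeI Φ) : Continuous Φ := by
  obtain ⟨N, φ, e, -, -, he, hΦ⟩ := hΦ
  rw [funext hΦ]
  refine continuous_finsetSum _ fun k _ => continuous_const.mul ?_
  exact continuous_abs.rpow_const fun _ => .inr (by exact_mod_cast zero_le_one.trans (he k))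

protected theorem map_zero (hΦ : TypeI Φ) : Φ 0 = 0 := by
  obtain ⟨N, φ, e, -, -, he, hΦ⟩ := hΦ
  rw [hΦ]
  refine Finset.sum_eq_zero fun k _ => ?_
  rw [abs_zero, Real.zero_rpow (by exact_mod_cast (one_pos.trans_le (he k)).ne'), mul_zero]

theorem tendsto_graph (hΦ : TypeI Φ) (x₀ y₀ : ℝ) :
    Tendsto (fun x => (x, y₀ + Φ (x - x₀))) (𝓝[≠] x₀) (𝓝[≠] (x₀, y₀)) := by
  refine tendsto_nhdsWithin_iff.2 ⟨?_, ?_⟩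
  · have hcont : Continuous fun x => (x, y₀ + Φ (x - x₀)) := by
      have := hΦ.continuous
      fun_prop
    simpa [hΦ.map_zero] using (hcont.tendsto x₀).mono_left nhdsWithin_le_nhds
  · exact eventually_nhdsWithin_of_forall fun x hx h => hx (congrArg Prod.fst h)

end TypeI

theorem evalEval_aeval_eq_pev (r : MvPolynomial (Fin 2) ℝ) (A B : ℝ[X][Y]) (s w : ℝ) :
    (aeval ![A, B] r).evalEval s w = pev r (A.evalEval s w, B.evalEval s w) := by
  have h : (Polynomial.evalEvalRingHom s w).comp (aeval ![A, B] : _ →ₐ[ℝ] ℝ[X][Y]).toRingHom =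
      eval ![A.evalEval s w, B.evalEval s w] := by
    refine ringHom_ext (fun c => ?_) fun i => ?_
    · simp [Polynomial.algebraMap_apply]
    · fin_cases i <;> simp
  exact congrArg (fun f => f r) h

theorem pev_rename_swap (r : MvPolynomial (Fin 2) ℝ) (v : ℝ × ℝ) :
    pev (rename (Equiv.swap (0 : Fin 2) 1) r) v = pev r v.swap := by
  unfold pev
  rw [eval_rename]
  congr 2
  funext i
  fin_cases i <;> simp

theorem exists_typeI_graph_frequently_pos_of_half_sector {r : MvPolynomial (Fin 2) ℝ} {x₀ y₀ σ : ℝ}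
    (hσ : |σ| = 1)
    (hr : ∃ᶠ v in 𝓝 (x₀, y₀), 0 < σ * (v.1 - x₀) ∧ |v.2 - y₀| ≤ σ * (v.1 - x₀) ∧ 0 < pev r v) :
    ∃ Φ, TypeI Φ ∧ ∃ᶠ x in 𝓝[≠] x₀, 0 < pev r (x, y₀ + Φ (x - x₀)) := by
  set R : ℝ[X][Y] := aeval ![.C (.C x₀ + .C σ * .X), .C (.C y₀) + .X] r with hR
  have hRr (s w : ℝ) : R.evalEval s w = pev r (x₀ + σ * s, y₀ + w) := by
    simp [hR, evalEval_aeval_eq_pev, Polynomial.evalEval_C]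
  have hσσ : σ * σ = 1 := by rw [← abs_mul_abs_self, hσ, one_mul]
  have hσ0 : σ ≠ 0 := left_ne_zero_of_mul_eq_one hσσ
  have hlocal : Tendsto (fun v : ℝ × ℝ => (σ * (v.1 - x₀), v.2 - y₀)) (𝓝 (x₀, y₀)) (𝓝 (0, 0)) := by
    have hcont : Continuous fun v : ℝ × ℝ => (σ * (v.1 - x₀), v.2 - y₀) := by fun_prop
    simpa using hcont.tendsto (x₀, y₀)
  obtain ⟨Φ, hΦ, hpos⟩ := exists_typeI_frequently_pos (R := R) <|
    hlocal.frequently <| hr.mono fun v hv => by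
      simpa [hRr, ← mul_assoc, hσσ] using hv
  have hray : Tendsto (fun t => x₀ + σ * t) (𝓝[>] 0) (𝓝[≠] x₀) := by
    refine tendsto_nhdsWithin_iff.2 ⟨?_, ?_⟩
    · have hcont : Continuous fun t => x₀ + σ * t := by fun_prop
      simpa using (hcont.tendsto 0).mono_left nhdsWithin_le_nhds
    · exact eventually_nhdsWithin_of_forall fun t (ht : 0 < t) => by simp [hσ0, ht.ne']
  have hΦσ (t : ℝ) : Φ (σ * t) = Φ t := by
    rcases eq_or_eq_neg_of_abs_eq hσ with rfl | rfl <;> simp [hΦ.even t]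
  exact ⟨Φ, hΦ, hray.frequently (hpos.mono fun t ht => by simpa [hRr, hΦσ] using ht)⟩

theorem exists_typeI_graph_frequently_pos_of_sector {r : MvPolynomial (Fin 2) ℝ} {x₀ y₀ : ℝ}
    (hr : ∃ᶠ v in 𝓝[≠] (x₀, y₀), |v.2 - y₀| ≤ |v.1 - x₀| ∧ 0 < pev r v) :
    ∃ Φ, TypeI Φ ∧ ∃ᶠ x in 𝓝[≠] x₀, 0 < pev r (x, y₀ + Φ (x - x₀)) := by
  have hsplit : ∃ᶠ v in 𝓝 (x₀, y₀),
      (0 < 1 * (v.1 - x₀) ∧ |v.2 - y₀| ≤ 1 * (v.1 - x₀) ∧ 0 < pev r v) ∨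
        (0 < -1 * (v.1 - x₀) ∧ |v.2 - y₀| ≤ -1 * (v.1 - x₀) ∧ 0 < pev r v) := by
    refine (frequently_nhdsWithin_iff.1 hr).mono ?_
    rintro ⟨x, y⟩ ⟨⟨hle, hpos⟩, hne⟩
    have hx : x - x₀ ≠ 0 := fun hx => hne <| by
      rw [hx, abs_zero, abs_nonpos_iff] at hle
      exact Prod.ext (sub_eq_zero.1 hx) (sub_eq_zero.1 hle)
    rcases hx.lt_or_gt with hx | hx
    · exact .inr ⟨by simpa using hx, by simpa [abs_of_neg hx] using hle, hpos⟩
    · exact .inl ⟨by simpa using hx, by simpa [abs_of_pos hx] using hle, hpos⟩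
  rcases frequently_or_distrib.1 hsplit with h | h
  · exact exists_typeI_graph_frequently_pos_of_half_sector (by simp) h
  · exact exists_typeI_graph_frequently_pos_of_half_sector (by simp) h

theorem tendsto_swap_nhdsNE {α β : Type*} [TopologicalSpace α] [TopologicalSpace β] (v : α × β) :
    Tendsto Prod.swap (𝓝[≠] v) (𝓝[≠] v.swap) :=
  (continuous_swap.tendsto v).inf
    (tendsto_principal_principal.2 fun _ hw h => hw (Prod.swap_injective h))

theorem exists_typeI_graph_frequently_pos {r : MvPolynomial (Fin 2) ℝ} {x₀ y₀ : ℝ}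
    (hr : ∃ᶠ v in 𝓝[≠] (x₀, y₀), 0 < pev r v) :
    ∃ Φ, TypeI Φ ∧ ((∃ᶠ x in 𝓝[≠] x₀, 0 < pev r (x, y₀ + Φ (x - x₀))) ∨
      ∃ᶠ y in 𝓝[≠] y₀, 0 < pev r (x₀ + Φ (y - y₀), y)) := by
  have hsplit : ∃ᶠ v in 𝓝[≠] (x₀, y₀), (|v.2 - y₀| ≤ |v.1 - x₀| ∧ 0 < pev r v) ∨
      (|v.1 - x₀| ≤ |v.2 - y₀| ∧ 0 < pev r v) :=
    hr.mono fun v hv => (le_total _ _).imp (⟨·, hv⟩) (⟨·, hv⟩)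
  rcases frequently_or_distrib.1 hsplit with h | h
  · exact (exists_typeI_graph_frequently_pos_of_sector h).imp fun Φ => .imp_right .inl
  · obtain ⟨Φ, hΦ, hpos⟩ := exists_typeI_graph_frequently_pos_of_sector
      (r := rename (Equiv.swap 0 1) r) <| (tendsto_swap_nhdsNE (x₀, y₀)).frequently <|
      h.mono fun v hv => by
        simpa [pev_rename_swap] using hv
    exact ⟨Φ, hΦ, .inr (by simpa only [pev_rename_swap, Prod.swap_prod_mk] using hpos)⟩

end TypeIGraphs

section Quotients

/-- A polynomial which is positive exactly at the points where `p / q` is defined and differs from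
`a` by more than `ε` (for `0 ≤ ε`). It turns the failure of a limit into a sign condition. -/
noncomputable def deviationPoly (p q : MvPolynomial (Fin 2) ℝ) (a ε : ℝ) : MvPolynomial (Fin 2) ℝ :=
  q ^ 2 * ((p - C a * q) ^ 2 - C (ε ^ 2) * q ^ 2)

variable (p q : MvPolynomial (Fin 2) ℝ) (a : ℝ)

theorem pev_deviationPoly_pos_iff {ε : ℝ} (hε : 0 ≤ ε) (v : ℝ × ℝ) :
    0 < pev (deviationPoly p q a ε) v ↔ pev q v ≠ 0 ∧ ε < |pev p v / pev q v - a| := by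
  have hpev : pev (deviationPoly p q a ε) v =
      pev q v ^ 2 * ((pev p v - a * pev q v) ^ 2 - ε ^ 2 * pev q v ^ 2) := by
    simp [deviationPoly, pev]
  rw [hpev]
  rcases eq_or_ne (pev q v) 0 with hq | hq
  · simp [hq]
  · rw [mul_pos_iff_of_pos_left (by positivity), sub_pos, ← mul_pow, sq_lt_sq, abs_mul,
      abs_of_nonneg hε, div_sub' hq, abs_div, lt_div_iff₀ (abs_pos.2 hq), mul_comm a]
    simp [hq, mul_comm]

theorem tendsto_pev_div_pev_iff {α : Type*} [TopologicalSpace α] (g : α → ℝ × ℝ) (c : α) :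
    Tendsto (fun x => pev p (g x) / pev q (g x)) (𝓝[{x | x ≠ c ∧ pev q (g x) ≠ 0}] c) (𝓝 a) ↔
      ∀ ε > 0, ∀ᶠ x in 𝓝[≠] c, ¬0 < pev (deviationPoly p q a ε) (g x) := by
  rw [Metric.nhds_basis_closedBall.tendsto_right_iff]
  refine forall₂_congr fun ε hε => ?_
  simp only [eventually_nhdsWithin_iff, pev_deviationPoly_pos_iff p q a hε.le,
    Metric.mem_closedBall, Real.dist_eq, mem_ofPred_eq, mem_compl_iff, mem_singleton_iff, not_and,
    not_lt, and_imp]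

end Quotients

theorem limit_iff_typeI_curve_limits_general (p q : MvPolynomial (Fin 2) ℝ) (x₀ y₀ a : ℝ) :
    Tendsto (fun v : ℝ × ℝ => pev p v / pev q v)
        (𝓝[{v : ℝ × ℝ | v ≠ (x₀, y₀) ∧ pev q v ≠ 0}] (x₀, y₀)) (𝓝 a) ↔
      ∀ Φ : ℝ → ℝ, TypeI Φ →
        Tendsto (fun x => pev p (x, y₀ + Φ (x - x₀)) / pev q (x, y₀ + Φ (x - x₀)))
          (𝓝[{x : ℝ | x ≠ x₀ ∧ pev q (x, y₀ + Φ (x - x₀)) ≠ 0}] x₀) (𝓝 a) ∧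
        Tendsto (fun y => pev p (x₀ + Φ (y - y₀), y) / pev q (x₀ + Φ (y - y₀), y))
          (𝓝[{y : ℝ | y ≠ y₀ ∧ pev q (x₀ + Φ (y - y₀), y) ≠ 0}] y₀) (𝓝 a) := by
  rw [tendsto_pev_div_pev_iff p q a fun v => v]
  simp only [tendsto_pev_div_pev_iff p q a fun x => (x, y₀ + _),
    tendsto_pev_div_pev_iff p q a fun y => (x₀ + _, y)]
  refine ⟨fun h Φ hΦ => ⟨fun ε hε => ?_, fun ε hε => ?_⟩, fun h ε hε =>
    not_frequently.1 fun hpos => ?_⟩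
  · exact (hΦ.tendsto_graph x₀ y₀).eventually (h ε hε)
  · exact ((tendsto_swap_nhdsNE (y₀, x₀)).comp (hΦ.tendsto_graph y₀ x₀)).eventually (h ε hε)
  · obtain ⟨Φ, hΦ, hx | hy⟩ := exists_typeI_graph_frequently_pos hpos
    · exact hx ((h Φ hΦ).1 ε hε)
    · exact hy ((h Φ hΦ).2 ε hε)

/-- A rational function tends to `a` at `(x₀,y₀)` iff it tends to `a` along every
type (i) curve in both coordinate directions (limits taken through points where the
denominator is nonzero). -/
theorem limit_iff_typeI_curve_limits (p q : MvPolynomial (Fin 2) ℝ) (hq : q ≠ 0)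
    (hcop : ∀ d : MvPolynomial (Fin 2) ℝ, d ∣ p → d ∣ q → IsUnit d)
    (x₀ y₀ a : ℝ) :
    Tendsto (fun v : ℝ × ℝ => pev p v / pev q v)
        (𝓝[{v : ℝ × ℝ | v ≠ (x₀, y₀) ∧ pev q v ≠ 0}] (x₀, y₀)) (𝓝 a) ↔
      ∀ Φ : ℝ → ℝ, TypeI Φ →
        Tendsto (fun x => pev p (x, y₀ + Φ (x - x₀)) / pev q (x, y₀ + Φ (x - x₀)))
          (𝓝[{x : ℝ | x ≠ x₀ ∧ pev q (x, y₀ + Φ (x - x₀)) ≠ 0}] x₀) (𝓝 a) ∧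
        Tendsto (fun y => pev p (x₀ + Φ (y - y₀), y) / pev q (x₀ + Φ (y - y₀), y))
          (𝓝[{y : ℝ | y ≠ y₀ ∧ pev q (x₀ + Φ (y - y₀), y) ≠ 0}] y₀) (𝓝 a) :=
  limit_iff_typeI_curve_limits_general p q x₀ y₀ a
end

section
/- For each point a = (a₁,a₂) in the open unit square (0,1)², define f_a(x,y) = (x−a₁)(y−a₂)/((x−a₁)² + (y−a₂)²) for (x,y) ≠ a and f_a(a) = 0. Then each f_a is bounded by 1/2 on [0,1]², and for any two distinct points a ≠ b of (0,1)² one has sup_{(x,y) ∈ [0,1]²} |f_a(x,y) − f_b(x,y)| ≥ 1/2. Consequently the set of bounded values-functions of rational functions on [0,1]², equipped with the uniform (sup) metric, contains an uncountable 1/2-separated family and hence is not separable. -/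
open MvPolynomial Filter Topology

/-- The closed unit square `[0,1]²`. -/
def ClosedSq : Set (ℝ × ℝ) := {v | v.1 ∈ Set.Icc (0 : ℝ) 1 ∧ v.2 ∈ Set.Icc (0 : ℝ) 1}

/-- The open unit square `(0,1)²`. -/
def OpenSq : Set (ℝ × ℝ) := {v | v.1 ∈ Set.Ioo (0 : ℝ) 1 ∧ v.2 ∈ Set.Ioo (0 : ℝ) 1}

/-- The function `f_a(x,y) = (x-a₁)(y-a₂)/((x-a₁)² + (y-a₂)²)` (with value `0` at `a`,
by the junk value of division by zero). -/
noncomputable def F16 (a v : ℝ × ℝ) : ℝ :=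
  (v.1 - a.1) * (v.2 - a.2) / ((v.1 - a.1) ^ 2 + (v.2 - a.2) ^ 2)

/-- `g` is the values-function on `ℝ²` of a rational function bounded on `[0,1]²`. -/
def RatBoundedOnSq (g : ℝ × ℝ → ℝ) : Prop :=
  ∃ p q : MvPolynomial (Fin 2) ℝ, q ≠ 0 ∧
    (∀ d : MvPolynomial (Fin 2) ℝ, d ∣ p → d ∣ q → IsUnit d) ∧
    (∃ M : ℝ, ∀ v ∈ ClosedSq, |pev p v / pev q v| ≤ M) ∧
    ∀ v : ℝ × ℝ, g v = pev p v / pev q v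

/-!
`f_a` is homogeneous of degree `0` about `a`: it is constant on every punctured line through `a`,
equal to `1/2` on the diagonal and to `-1/2` on the antidiagonal. For `b ≠ a` the function `f_b` is
continuous at `a`, so a uniform distance `s` between `f_a` and `f_b` near `a` gives
`|±1/2 - f_b(a)| ≤ s`, whence `1 ≤ 2 s`. The uncountably many `f_a` are therefore `1/2`-separated,
and a function within `1/8` of two of them would put these two within `1/4` of each other.
-/

section Separability

theorem not_countable_of_isOpen (𝕜 : Type*) {E : Type*} [NontriviallyNormedField 𝕜]
    [CompleteSpace 𝕜] [AddCommGroup E] [Module 𝕜 E] [Nontrivial E] [TopologicalSpace E]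
    [ContinuousAdd E] [ContinuousSMul 𝕜 E] {s : Set E} (hs : IsOpen s) (hne : s.Nonempty) :
    ¬ s.Countable := by
  intro hcount
  have hint : interior s = ∅ := interior_eq_empty_iff_dense_compl.mpr (hcount.dense_compl 𝕜)
  exact hne.ne_empty (hs.interior_eq.symm.trans hint)

theorem countable_of_pairwise_separated_of_countable_net {α E : Type*} [PseudoMetricSpace E]
    {K : Set α} {S D : Set (α → E)} {ε : ℝ}
    (hsep : S.Pairwise fun g h => ∃ v ∈ K, ε ≤ dist (g v) (h v)) (hD : D.Countable)
    (hnet : ∀ g ∈ S, ∃ h ∈ D, ∀ v ∈ K, dist (g v) (h v) < ε / 2) : S.Countable := by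
  choose! φ hφD hφ using hnet
  refine Set.MapsTo.countable_of_injOn hφD (fun g hg h hh hgh => ?_) hD
  by_contra hne
  obtain ⟨v, hv, hfar⟩ := hsep hg hh hne
  refine hfar.not_gt ?_
  calc dist (g v) (h v) ≤ dist (g v) (φ g v) + dist (h v) (φ g v) := dist_triangle_right _ _ _
    _ < ε / 2 + ε / 2 := add_lt_add (hφ g hg v hv) (hgh ▸ hφ h hh v hv)
    _ = ε := add_halves ε

end Separability

section Coprimality

theorem isRelPrime_mul_sq_add_sq {R : Type*} [CommRing R] [DecompositionMonoid R] {x y : R}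
    (h : IsRelPrime x y) : IsRelPrime (x * y) (x ^ 2 + y ^ 2) := by
  have hx : IsRelPrime x (x ^ 2 + y ^ 2) := fun d hdx hd =>
    h.pow_right hdx ((dvd_add_right (dvd_pow hdx two_ne_zero)).mp hd)
  have hy : IsRelPrime y (x ^ 2 + y ^ 2) := fun d hdy hd =>
    h.symm.pow_right hdy ((dvd_add_left (dvd_pow hdy two_ne_zero)).mp hd)
  exact hx.mul_left hy

variable {σ R : Type*} [CommRing R] [IsDomain R]

theorem irreducible_X_sub_C (i : σ) (a : R) : Irreducible (X i - C a : MvPolynomial σ R) := by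
  have h := irreducible_mul_X_add (1 : MvPolynomial σ R) (C (-a)) i one_ne_zero (by simp)
    (by simp) isRelPrime_one_left
  rwa [one_mul, C_neg, ← sub_eq_add_neg] at h

theorem isRelPrime_X_sub_C_X_sub_C {i j : σ} (hij : i ≠ j) (a b : R) :
    IsRelPrime (X i - C a : MvPolynomial σ R) (X j - C b) := by
  classical
  refine (irreducible_X_sub_C i a).isRelPrime_iff_not_dvd.mpr fun hdvd => ?_
  have heval := map_dvd (eval (Function.update (fun _ => b + 1) i a)) hdvd
  simp [Function.update_of_ne hij.symm] at heval

end Coprimality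

section OpenSquare

theorem isOpen_openSq : IsOpen OpenSq := isOpen_Ioo.prod isOpen_Ioo

theorem closedSq_mem_nhds {a : ℝ × ℝ} (ha : a ∈ OpenSq) : ClosedSq ∈ 𝓝 a :=
  prod_mem_nhds (Icc_mem_nhds ha.1.1 ha.1.2) (Icc_mem_nhds ha.2.1 ha.2.2)

theorem not_countable_openSq : ¬ OpenSq.Countable :=
  not_countable_of_isOpen ℝ isOpen_openSq ⟨(1 / 2, 1 / 2), by norm_num [OpenSq]⟩

end OpenSquare

section F16

theorem abs_F16_le_half (a v : ℝ × ℝ) : |F16 a v| ≤ 1 / 2 := by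
  have amgm (x y : ℝ) : |x * y| ≤ 1 / 2 * (x ^ 2 + y ^ 2) := by
    rw [abs_le]
    constructor <;> linarith [sq_nonneg (x + y), sq_nonneg (x - y)]
  rw [F16, abs_div, abs_of_nonneg (by positivity : 0 ≤ (v.1 - a.1) ^ 2 + (v.2 - a.2) ^ 2)]
  exact div_le_of_le_mul₀ (by positivity) (by norm_num) (amgm _ _)

theorem F16_add_smul (a w : ℝ × ℝ) {t : ℝ} (ht : t ≠ 0) : F16 a (a + t • w) = F16 0 w := by
  simp only [F16, Prod.fst_add, Prod.snd_add, Prod.smul_fst, Prod.smul_snd, smul_eq_mul,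
    add_sub_cancel_left, Prod.fst_zero, Prod.snd_zero, sub_zero]
  rw [← mul_div_mul_left (w.1 * w.2) _ (pow_ne_zero 2 ht)]
  ring

theorem continuousAt_F16 {a v : ℝ × ℝ} (hva : v ≠ a) : ContinuousAt (F16 a) v := by
  refine ContinuousAt.div₀ (by fun_prop) (by fun_prop) fun hzero => hva ?_
  ext <;> nlinarith [sq_nonneg (v.1 - a.1), sq_nonneg (v.2 - a.2)]

theorem abs_F16_zero_sub_F16_le {a b : ℝ × ℝ} (hab : a ≠ b) {K : Set (ℝ × ℝ)} (hK : K ∈ 𝓝 a)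
    {s : ℝ} (hs : ∀ v ∈ K, |F16 a v - F16 b v| ≤ s) (w : ℝ × ℝ) : |F16 0 w - F16 b a| ≤ s := by
  have hline : Tendsto (fun t : ℝ => a + t • w) (𝓝[≠] 0) (𝓝 a) := by
    have hcont : Continuous fun t : ℝ => a + t • w := by fun_prop
    exact (hcont.tendsto' 0 a (by simp)).mono_left nhdsWithin_le_nhds
  have hlim : Tendsto (fun t : ℝ => |F16 0 w - F16 b (a + t • w)|) (𝓝[≠] 0)
      (𝓝 |F16 0 w - F16 b a|) :=
    (tendsto_const_nhds.sub ((continuousAt_F16 hab).tendsto.comp hline)).abs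
  refine le_of_tendsto hlim ?_
  filter_upwards [hline hK, self_mem_nhdsWithin] with t htK ht
  simpa only [F16_add_smul a w ht] using hs _ htK

theorem exists_lt_abs_F16_sub_F16 {a b : ℝ × ℝ} (hab : a ≠ b) {K : Set (ℝ × ℝ)} (hK : K ∈ 𝓝 a)
    {s : ℝ} (hs : s < 1 / 2) : ∃ v ∈ K, s < |F16 a v - F16 b v| := by
  by_contra! hle
  have hdiag := abs_F16_zero_sub_F16_le hab hK hle (1, 1)
  have hanti := abs_F16_zero_sub_F16_le hab hK hle (1, -1)
  norm_num [F16] at hdiag hanti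
  rw [abs_le] at hdiag hanti
  linarith [hdiag.2, hanti.1]

theorem F16_injective : Function.Injective F16 := by
  intro a b heq
  by_contra hab
  obtain ⟨v, -, hv⟩ := exists_lt_abs_F16_sub_F16 hab univ_mem (s := 0) (by norm_num)
  simp [heq] at hv

theorem half_le_sSup_abs_F16_sub_F16 {a b : ℝ × ℝ} (hab : a ≠ b) {K : Set (ℝ × ℝ)}
    (hK : K ∈ 𝓝 a) : 1 / 2 ≤ sSup ((fun v => |F16 a v - F16 b v|) '' K) := by
  have hbdd : BddAbove ((fun v => |F16 a v - F16 b v|) '' K) := by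
    refine ⟨1 / 2 + 1 / 2, ?_⟩
    rintro _ ⟨v, -, rfl⟩
    exact (abs_sub _ _).trans (add_le_add (abs_F16_le_half a v) (abs_F16_le_half b v))
  refine le_of_forall_lt fun s hs => ?_
  obtain ⟨v, hv, hlt⟩ := exists_lt_abs_F16_sub_F16 hab hK hs
  exact lt_csSup_of_lt hbdd (Set.mem_image_of_mem _ hv) hlt

theorem ratBoundedOnSq_F16 (a : ℝ × ℝ) : RatBoundedOnSq (F16 a) := by
  have heval (v : ℝ × ℝ) : F16 a v = pev ((X 0 - C a.1) * (X 1 - C a.2)) v /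
      pev ((X 0 - C a.1) ^ 2 + (X 1 - C a.2) ^ 2) v := by
    simp [F16, pev]
  refine ⟨_, _, fun hzero => ?_, ?_, ⟨1 / 2, fun v _ => heval v ▸ abs_F16_le_half a v⟩, heval⟩
  · simpa using congrArg (eval ![a.1 + 1, a.2]) hzero
  · exact isRelPrime_mul_sq_add_sq (isRelPrime_X_sub_C_X_sub_C zero_ne_one a.1 a.2)

theorem not_countable_F16_image_openSq : ¬ (F16 '' OpenSq).Countable := fun hcount =>
  not_countable_openSq (Set.countable_of_injective_of_countable_image F16_injective.injOn hcount)

theorem pairwise_separated_F16_image_openSq {ε : ℝ} (hε : ε < 1 / 2) :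
    (F16 '' OpenSq).Pairwise fun g h => ∃ v ∈ ClosedSq, ε ≤ dist (g v) (h v) := by
  rintro _ ⟨a, ha, rfl⟩ _ ⟨b, -, rfl⟩ hne
  have hab : a ≠ b := ne_of_apply_ne F16 hne
  obtain ⟨v, hv, hlt⟩ := exists_lt_abs_F16_sub_F16 hab (closedSq_mem_nhds ha) hε
  exact ⟨v, hv, hlt.le⟩

end F16

/-- Each `f_a` is bounded by `1/2` on `[0,1]²`, distinct points give functions at uniform
distance at least `1/2`, hence there is an uncountable `1/2`-separated family of bounded
rational value-functions on `[0,1]²` and the set of all of them is not separable in the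
uniform metric. -/
theorem f16_separated_family :
    (∀ a ∈ OpenSq, ∀ v ∈ ClosedSq, |F16 a v| ≤ 1 / 2) ∧
    (∀ a ∈ OpenSq, ∀ b ∈ OpenSq, a ≠ b →
      1 / 2 ≤ sSup ((fun v => |F16 a v - F16 b v|) '' ClosedSq)) ∧
    (∃ S : Set (ℝ × ℝ → ℝ), ¬ S.Countable ∧ (∀ g ∈ S, RatBoundedOnSq g) ∧
      ∀ g ∈ S, ∀ h ∈ S, g ≠ h →
        1 / 2 ≤ sSup ((fun v => |g v - h v|) '' ClosedSq)) ∧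
    ¬ ∃ D : Set (ℝ × ℝ → ℝ), D.Countable ∧ (∀ g ∈ D, RatBoundedOnSq g) ∧
      ∀ g : ℝ × ℝ → ℝ, RatBoundedOnSq g → ∀ ε : ℝ, 0 < ε →
        ∃ h ∈ D, ∀ v ∈ ClosedSq, |g v - h v| < ε := by
  refine ⟨fun a _ v _ => abs_F16_le_half a v,
    fun a ha b _ hab => half_le_sSup_abs_F16_sub_F16 hab (closedSq_mem_nhds ha),
    ⟨F16 '' OpenSq, not_countable_F16_image_openSq, ?_, ?_⟩, ?_⟩
  · rintro _ ⟨a, -, rfl⟩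
    exact ratBoundedOnSq_F16 a
  · rintro _ ⟨a, ha, rfl⟩ _ ⟨b, -, rfl⟩ hne
    exact half_le_sSup_abs_F16_sub_F16 (ne_of_apply_ne F16 hne) (closedSq_mem_nhds ha)
  · rintro ⟨D, hD, -, hdense⟩
    have hsep := pairwise_separated_F16_image_openSq (by norm_num : (1 / 4 : ℝ) < 1 / 2)
    refine not_countable_F16_image_openSq
      (countable_of_pairwise_separated_of_countable_net hsep hD ?_)
    rintro _ ⟨a, -, rfl⟩
    exact hdense _ (ratBoundedOnSq_F16 a) (1 / 4 / 2) (by norm_num)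
end

section
/- Define g : ℝ² → ℝ by g(x,y) = e^{−1/x²}·y / (e^{−2/x²} + y²) for x ≠ 0, and g(x,y) = 0 for x = 0. Then: (a) |g(x,y)| ≤ 1/2 for all (x,y) ∈ ℝ²; (b) for every function Φ of type (i), lim_{x→0} g(x, Φ(x)) = 0; (c) lim_{x→0, x≠0} g(x, e^{−1/x²}) = 1/2, so g is discontinuous at (0,0) and its limits along all type-(i) curves exist although g has no limit at (0,0). -/
open Filter Topology

/-- The function `g(x,y) = e^{-1/x²} y / (e^{-2/x²} + y²)` for `x ≠ 0`, and `0` for `x = 0`. -/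
noncomputable def g17 (x y : ℝ) : ℝ :=
  if x = 0 then 0 else Real.exp (-1 / x ^ 2) * y / (Real.exp (-2 / x ^ 2) + y ^ 2)

/-!
With `E = exp (-1 / x ^ 2)`, off the line `x = 0` the function is the degree-zero homogeneous kernel
`a * b / (a ^ 2 + b ^ 2)` at `(a, b) = (E, y)`. The kernel is at most `1 / 2` in absolute value,
equals `1 / 2` on the diagonal, and is bounded by `|a / b|`. A nonzero type (i) function is
equivalent to its lowest term `c * |x| ^ p`, and `E` is negligible against every power of `|x|`,
so `E / Φ x` tends to `0`. The limits `0` along the axis and `1 / 2` along `y = E` rule out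
a limit at the origin.
-/

open Asymptotics

section Kernel

variable {K : Type*} [Field K] [LinearOrder K] [IsStrictOrderedRing K]

theorem abs_mul_div_sq_add_sq_le_half (a b : K) : |a * b / (a ^ 2 + b ^ 2)| ≤ 1 / 2 := by
  have hd : 0 ≤ a ^ 2 + b ^ 2 := by positivity
  rw [abs_div, abs_of_nonneg hd]
  refine div_le_of_le_mul₀ hd (by positivity) ?_
  have amgm : 2 * |a| * |b| ≤ |a| ^ 2 + |b| ^ 2 := two_mul_le_add_sq |a| |b|
  rw [sq_abs, sq_abs] at amgm
  rw [abs_mul]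
  linarith

-- At `b = 0` this holds with the value `a / 0 = 0`.
theorem abs_mul_div_sq_add_sq_le_abs_div (a b : K) :
    |a * b / (a ^ 2 + b ^ 2)| ≤ |a / b| := by
  rcases eq_or_ne b 0 with rfl | hb
  · simp
  calc |a * b / (a ^ 2 + b ^ 2)| = |a * b| / (a ^ 2 + b ^ 2) := by
        rw [abs_div, abs_of_nonneg (a := a ^ 2 + b ^ 2) (by positivity)]
    _ ≤ |a * b| / b ^ 2 := by
        gcongr
        exact le_add_of_nonneg_left (sq_nonneg a)
    _ = |a / b| := by
        rw [← abs_of_nonneg (sq_nonneg b), ← abs_div, sq, mul_div_mul_right a b hb]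

end Kernel

theorem mul_self_div_sq_add_sq_self {K : Type*} [Field K] {a : K} (ha : a ≠ 0) :
    a * a / (a ^ 2 + a ^ 2) = 1 / 2 := by
  rw [← sq, ← two_mul, div_mul_cancel_right₀ (pow_ne_zero 2 ha), one_div]

theorem tendsto_mul_div_sq_add_sq_of_isLittleO {α : Type*} {l : Filter α} {u v : α → ℝ}
    (h : u =o[l] v) : Tendsto (fun x => u x * v x / (u x ^ 2 + v x ^ 2)) l (𝓝 0) :=
  squeeze_zero_norm (fun x => abs_mul_div_sq_add_sq_le_abs_div (u x) (v x))
    (by simpa using h.tendsto_div_nhds_zero.abs)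

theorem isLittleO_abs_rpow_abs_rpow {p q : ℝ} (hpq : p < q) :
    (fun x : ℝ => |x| ^ q) =o[𝓝[≠] 0] fun x => |x| ^ p := by
  have hpow : Tendsto (fun x : ℝ => |x| ^ (q - p)) (𝓝[≠] 0) (𝓝 0) := by
    have hcont : Continuous fun x : ℝ => |x| ^ (q - p) :=
      continuous_abs.rpow_const fun _ => Or.inr (sub_pos.2 hpq).le
    simpa [Real.zero_rpow (sub_pos.2 hpq).ne'] using hcont.continuousWithinAt.tendsto (x := 0)
  refine (isLittleO_iff_tendsto' ?_).2 (hpow.congr' ?_)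
  all_goals filter_upwards [self_mem_nhdsWithin] with x hx
  · exact fun h => absurd h (Real.rpow_pos_of_pos (abs_pos.2 hx) p).ne'
  · exact Real.rpow_sub (abs_pos.2 hx) q p

theorem isEquivalent_sum_mul_abs_rpow {ι : Type*} {s : Finset ι} {i₀ : ι} {c e : ι → ℝ}
    (hi₀ : i₀ ∈ s) (hc : c i₀ ≠ 0) (he : ∀ i ∈ s, i ≠ i₀ → e i₀ < e i) :
    (fun x : ℝ => ∑ i ∈ s, c i * |x| ^ e i) ~[𝓝[≠] 0] fun x => c i₀ * |x| ^ e i₀ := by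
  classical
  have htail : (fun x : ℝ => ∑ i ∈ s.erase i₀, c i * |x| ^ e i)
      =o[𝓝[≠] 0] fun x => c i₀ * |x| ^ e i₀ := by
    refine IsLittleO.fun_sum fun i hi => ?_
    obtain ⟨hne, his⟩ := Finset.mem_erase.1 hi
    exact ((isLittleO_abs_rpow_abs_rpow (he i his hne)).const_mul_left (c i)).const_mul_right hc
  exact (IsEquivalent.refl.add_isLittleO htail).congr_left
    (.of_forall fun x => Finset.add_sum_erase s (fun i => c i * |x| ^ e i) hi₀)

theorem isLittleO_exp_neg_one_div_sq_abs_rpow (p : ℝ) :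
    (fun x : ℝ => Real.exp (-1 / x ^ 2)) =o[𝓝[≠] 0] fun x => |x| ^ p := by
  have hgauss : (fun t : ℝ => Real.exp (-1 * t ^ 2)) =o[atTop] fun t => t ^ (-p) :=
    (exp_neg_mul_sq_isLittleO_exp_neg one_pos).trans
      (by simpa using isLittleO_exp_neg_mul_rpow_atTop one_pos (-p))
  refine (hgauss.comp_tendsto tendsto_norm_inv_nhdsNE_zero_atTop).congr (fun x => ?_) fun x => ?_
  · simp [div_eq_mul_inv]
  · simp [Real.inv_rpow, Real.rpow_neg]

theorem tendsto_exp_neg_one_div_sq_nhdsNE_zero :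
    Tendsto (fun x : ℝ => Real.exp (-1 / x ^ 2)) (𝓝[≠] 0) (𝓝 0) := by
  simpa using (isLittleO_exp_neg_one_div_sq_abs_rpow 0).tendsto_div_nhds_zero

theorem tendsto_graph_nhdsNE {X Y : Type*} [TopologicalSpace X] [TopologicalSpace Y]
    {f : X → Y} {a : X} {b : Y} (hf : Tendsto f (𝓝[≠] a) (𝓝 b)) :
    Tendsto (fun x => (x, f x)) (𝓝[≠] a) (𝓝[≠] (a, b)) := by
  refine tendsto_nhdsWithin_iff.2 ⟨(tendsto_id.mono_left nhdsWithin_le_nhds).prodMk_nhds hf, ?_⟩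
  filter_upwards [self_mem_nhdsWithin] with x hx h
  exact hx (congrArg Prod.fst h)

theorem TypeI.eq_zero_or_isEquivalent {Φ : ℝ → ℝ} (hΦ : TypeI Φ) :
    Φ = 0 ∨ ∃ c p : ℝ, c ≠ 0 ∧ Φ ~[𝓝[≠] 0] fun x => c * |x| ^ p := by
  obtain ⟨N, φ, e, hφ, he, -, hsum⟩ := hΦ
  obtain rfl : Φ = fun t => ∑ k, φ k * |t| ^ (e k : ℝ) := funext hsum
  cases N with
  | zero => exact Or.inl (funext fun t => by simp)
  | succ N =>
    refine Or.inr ⟨φ 0, e 0, hφ 0, ?_⟩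
    exact isEquivalent_sum_mul_abs_rpow (e := fun k => (e k : ℝ)) (Finset.mem_univ 0) (hφ 0)
      fun k _ hk => Rat.cast_lt.2 (he (Fin.pos_iff_ne_zero.2 hk))

theorem g17_of_ne_zero {x : ℝ} (hx : x ≠ 0) (y : ℝ) :
    g17 x y = Real.exp (-1 / x ^ 2) * y / (Real.exp (-1 / x ^ 2) ^ 2 + y ^ 2) := by
  have hsq : Real.exp (-2 / x ^ 2) = Real.exp (-1 / x ^ 2) ^ 2 := by
    rw [← Real.exp_nat_mul]
    congr 1
    push_cast
    ring
  rw [g17, if_neg hx, hsq]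

theorem g17_zero_right (x : ℝ) : g17 x 0 = 0 := by
  simp [g17]

theorem abs_g17_le_half (x y : ℝ) : |g17 x y| ≤ 1 / 2 := by
  rcases eq_or_ne x 0 with rfl | hx
  · simp [g17]
  · rw [g17_of_ne_zero hx]
    exact abs_mul_div_sq_add_sq_le_half _ y

theorem tendsto_g17_of_isLittleO {f : ℝ → ℝ}
    (hf : (fun x : ℝ => Real.exp (-1 / x ^ 2)) =o[𝓝[≠] 0] f) :
    Tendsto (fun x => g17 x (f x)) (𝓝[≠] 0) (𝓝 0) := by
  refine (tendsto_mul_div_sq_add_sq_of_isLittleO hf).congr' ?_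
  filter_upwards [self_mem_nhdsWithin] with x hx
  exact (g17_of_ne_zero hx (f x)).symm

theorem TypeI.tendsto_g17 {Φ : ℝ → ℝ} (hΦ : TypeI Φ) :
    Tendsto (fun x => g17 x (Φ x)) (𝓝[≠] 0) (𝓝 0) := by
  rcases hΦ.eq_zero_or_isEquivalent with rfl | ⟨c, p, hc, hequiv⟩
  · simp [g17_zero_right]
  · refine tendsto_g17_of_isLittleO (IsLittleO.trans_isEquivalent ?_ hequiv.symm)
    exact (isLittleO_exp_neg_one_div_sq_abs_rpow p).const_mul_right hc

theorem g17_exp_neg_one_div_sq {x : ℝ} (hx : x ≠ 0) : g17 x (Real.exp (-1 / x ^ 2)) = 1 / 2 := by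
  rw [g17_of_ne_zero hx, mul_self_div_sq_add_sq_self (Real.exp_pos _).ne']

theorem tendsto_g17_exp_neg_one_div_sq :
    Tendsto (fun x => g17 x (Real.exp (-1 / x ^ 2))) (𝓝[≠] 0) (𝓝 (1 / 2)) := by
  refine tendsto_const_nhds.congr' ?_
  filter_upwards [self_mem_nhdsWithin] with x hx
  exact (g17_exp_neg_one_div_sq hx).symm

theorem not_exists_tendsto_g17_nhdsNE_zero :
    ¬ ∃ l : ℝ, Tendsto (fun v : ℝ × ℝ => g17 v.1 v.2) (𝓝[≠] (0, 0)) (𝓝 l) := by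
  rintro ⟨l, hl⟩
  have along_axis : Tendsto (fun x => g17 x 0) (𝓝[≠] 0) (𝓝 l) :=
    hl.comp (tendsto_graph_nhdsNE tendsto_const_nhds)
  have along_exp : Tendsto (fun x => g17 x (Real.exp (-1 / x ^ 2))) (𝓝[≠] 0) (𝓝 l) :=
    hl.comp (tendsto_graph_nhdsNE tendsto_exp_neg_one_div_sq_nhdsNE_zero)
  have l_eq_zero : l = 0 :=
    tendsto_nhds_unique along_axis (by simp only [g17_zero_right, tendsto_const_nhds])
  have l_eq_half : l = 1 / 2 := tendsto_nhds_unique along_exp tendsto_g17_exp_neg_one_div_sq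
  norm_num [l_eq_zero] at l_eq_half

/-- `g17` is bounded by `1/2`, tends to `0` along every type (i) curve, tends to `1/2`
along `y = e^{-1/x²}`, is discontinuous at the origin and has no limit there. -/
theorem g17_properties :
    (∀ x y : ℝ, |g17 x y| ≤ 1 / 2) ∧
    (∀ Φ : ℝ → ℝ, TypeI Φ → Tendsto (fun x => g17 x (Φ x)) (𝓝[≠] (0 : ℝ)) (𝓝 0)) ∧
    Tendsto (fun x => g17 x (Real.exp (-1 / x ^ 2))) (𝓝[≠] (0 : ℝ)) (𝓝 (1 / 2)) ∧
    ¬ ContinuousAt (fun v : ℝ × ℝ => g17 v.1 v.2) ((0, 0) : ℝ × ℝ) ∧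
    ¬ ∃ l : ℝ, Tendsto (fun v : ℝ × ℝ => g17 v.1 v.2)
        (𝓝[≠] ((0, 0) : ℝ × ℝ)) (𝓝 l) := by
  refine ⟨abs_g17_le_half, fun _ hΦ => hΦ.tendsto_g17, tendsto_g17_exp_neg_one_div_sq,
    fun hcont => ?_, not_exists_tendsto_g17_nhdsNE_zero⟩
  exact not_exists_tendsto_g17_nhdsNE_zero ⟨g17 0 0, hcont.tendsto.mono_left nhdsWithin_le_nhds⟩
end
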